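/- Let Σ be a fan in ℝ^n satisfying conditions (2.9.1) and (2.9.2). Let D = (d_1,…,d_r) and D' = (d'_1,…,d'_r) be r-tuples of positive integers with D' − D ∈ (ℤ_{≥0})^r ∖ {0}. Then, for any admissible choice of the pair (φ_D, (x_{D,1},…,x_{D,r})), the stabilization map s_{D,D'} : Pol*_D(S¹,X_Σ) → Pol*_{D'}(S¹,X_Σ) is a homotopy equivalence through dimension d(D,Σ) = 2(r_min(Σ)−1)·d_min − 2. -/

import Mathlib

open scoped BigOperators
attribute [local instance] Classical.propDecidable

noncomputable section

namespace Toric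


/-! ### Cones and fans -/

/-- The real vector associated to an integer vector. -/
def zr {n : ℕ} (v : Fin n → ℤ) : Fin n → ℝ := fun i => (v i : ℝ)

/-- A convex rational polyhedral cone in `ℝ^n`. -/
def IsRatCone {n : ℕ} (σ : Set (Fin n → ℝ)) : Prop :=
  ∃ s : Finset (Fin n → ℤ),
    σ = {x | ∃ lam : (Fin n → ℤ) → ℝ, (∀ v, 0 ≤ lam v) ∧ x = ∑ v ∈ s, lam v • zr v}

/-- A cone is strongly convex if `σ ∩ (-σ) = {0}`. -/
def StronglyConvex {n : ℕ} (σ : Set (Fin n → ℝ)) : Prop := σ ∩ (-σ) = {0}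

/-- `τ` is a face of `σ`, cut out by a linear form nonnegative on `σ`. -/
def IsFaceOf {n : ℕ} (τ σ : Set (Fin n → ℝ)) : Prop :=
  ∃ L : (Fin n → ℝ) →ₗ[ℝ] ℝ, (∀ x ∈ σ, 0 ≤ L x) ∧ τ = σ ∩ {x | L x = 0}

/-- A fan in `ℝ^n`: a finite collection of strongly convex rational polyhedral cones,
closed under taking faces, such that the intersection of two cones is a face of each;
we also require that it strictly contains `{0}`. -/
structure Fan (n : ℕ) where
  cones : Set (Set (Fin n → ℝ))
  finite : cones.Finite
  ratCone : ∀ σ ∈ cones, IsRatCone σ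
  stronglyConvex : ∀ σ ∈ cones, StronglyConvex σ
  face_mem : ∀ σ ∈ cones, ∀ τ, IsFaceOf τ σ → τ ∈ cones
  inter_face : ∀ σ ∈ cones, ∀ τ ∈ cones, IsFaceOf (σ ∩ τ) σ
  zero_mem : ({0} : Set (Fin n → ℝ)) ∈ cones
  nontrivial : cones ≠ {({0} : Set (Fin n → ℝ))}

/-- A fan is complete if its cones cover `ℝ^n`. -/
def Fan.Complete {n : ℕ} (F : Fan n) : Prop := ⋃₀ F.cones = Set.univ

/-- A fan is non-singular if each of its cones is spanned by part of a `ℤ`-basis of `ℤ^n`. -/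
def Fan.NonSingular {n : ℕ} (F : Fan n) : Prop :=
  ∀ σ ∈ F.cones, ∃ (b : Module.Basis (Fin n) ℤ (Fin n → ℤ)) (s : Finset (Fin n)),
    σ = {x | ∃ lam : Fin n → ℝ, (∀ i, 0 ≤ lam i) ∧ x = ∑ i ∈ s, lam i • zr (b i)}

/-- The ray (one-dimensional cone) generated by a vector. -/
def ray {n : ℕ} (v : Fin n → ℝ) : Set (Fin n → ℝ) := {x | ∃ t : ℝ, 0 ≤ t ∧ x = t • v}

/-- The cone spanned by the vectors `n_i`, `i ∈ s`. -/
def coneIdx {n r : ℕ} (N : Fin r → Fin n → ℤ) (s : Finset (Fin r)) : Set (Fin n → ℝ) :=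
  {x | ∃ lam : Fin r → ℝ, (∀ i, 0 ≤ lam i) ∧ x = ∑ i ∈ s, lam i • zr (N i)}

/-- A point of `ℝ^n` lying in the lattice `ℤ^n`. -/
def IsLatticePoint {n : ℕ} (x : Fin n → ℝ) : Prop := ∀ i, ∃ m : ℤ, x i = (m : ℝ)

/-- `N 1, …, N r` is the (complete, repetition-free) list of primitive generators of the
one-dimensional cones of the fan `F`. -/
structure IsPrimGens {n r : ℕ} (F : Fan n) (N : Fin r → Fin n → ℤ) : Prop where
  ray_mem : ∀ k, ray (zr (N k)) ∈ F.cones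
  ne_zero : ∀ k, N k ≠ 0
  primitive : ∀ k, ray (zr (N k)) ∩ {x | IsLatticePoint x}
      = {x | ∃ c : ℕ, x = (c : ℝ) • zr (N k)}
  inj : Function.Injective N
  complete : ∀ σ ∈ F.cones, Module.finrank ℝ (Submodule.span ℝ σ) = 1 →
      ∃ k, σ = ray (zr (N k))

/-- Condition (2.9.1): a positive integral relation among the primitive generators. -/
def Cond1 {n r : ℕ} (N : Fin r → Fin n → ℤ) : Prop :=
  ∃ d : Fin r → ℕ, (∀ k, 0 < d k) ∧ ∑ k, (d k : ℤ) • N k = 0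

/-- Condition (2.9.2): the primitive generators span `ℤ^n` over `ℤ`. -/
def Cond2 {n r : ℕ} (N : Fin r → Fin n → ℤ) : Prop :=
  Submodule.span ℤ (Set.range N) = ⊤

/-- The underlying simplicial complex `K_Σ` of a fan. -/
def KC {n r : ℕ} (F : Fan n) (N : Fin r → Fin n → ℤ) : Set (Finset (Fin r)) :=
  {s | coneIdx N s ∈ F.cones}

/-- A primitive set: it spans no cone of the fan, but every proper subset does. -/
def PrimitiveSet {r : ℕ} (K : Set (Finset (Fin r))) (s : Finset (Fin r)) : Prop :=
  s ∉ K ∧ ∀ t ⊂ s, t ∈ K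

/-- `r_min`: the minimal cardinality of a primitive set. -/
def rmin {r : ℕ} (K : Set (Finset (Fin r))) : ℕ :=
  sInf {m | ∃ s : Finset (Fin r), PrimitiveSet K s ∧ s.card = m}

/-- `d_min = min {d_1, …, d_r}`. -/
def dmin {r : ℕ} (D : Fin r → ℕ) : ℕ := sInf (Set.range D)

/-- The stability dimension `d(D,Σ) = 2(r_min − 1) d_min − 2`. -/
def dBound {r : ℕ} (K : Set (Finset (Fin r))) (D : Fin r → ℕ) : ℤ :=
  2 * ((rmin K : ℤ) - 1) * (dmin D : ℤ) - 2

/-- The connectivity bound `C_D(Σ) = 2(r_min − 1) d_min − 1`. -/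
def CBound {r : ℕ} (K : Set (Finset (Fin r))) (D : Fin r → ℕ) : ℤ :=
  2 * ((rmin K : ℤ) - 1) * (dmin D : ℤ) - 1

/-! ### Coordinate subspaces, `U(K)`, `G_Σ` and the toric quotient -/

/-- The coordinate subspace `L_σ ⊆ ℂ^r`. -/
def LSub {r : ℕ} (σ : Finset (Fin r)) : Set (Fin r → ℂ) := {x | ∀ i ∈ σ, x i = 0}

/-- The complement `U(K)` of the coordinate subspace arrangement of type `K`. -/
def UK {r : ℕ} (K : Set (Finset (Fin r))) : Set (Fin r → ℂ) :=
  (⋃ σ ∈ {s : Finset (Fin r) | s ∉ K}, LSub σ)ᶜ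

lemma mem_UK {r : ℕ} {K : Set (Finset (Fin r))} {x : Fin r → ℂ} :
    x ∈ UK K ↔ ∀ σ : Finset (Fin r), σ ∉ K → ∃ i ∈ σ, x i ≠ 0 := by
  constructor
  · intro h σ hσ
    by_contra hc
    push_neg at hc
    exact h (Set.mem_biUnion hσ (fun i hi => hc i hi))
  · intro h hx
    rcases Set.mem_iUnion₂.1 hx with ⟨σ, hσ, hxσ⟩
    rcases h σ hσ with ⟨i, hi, hne⟩
    exact hne (hxσ i hi)

/-- The group `G_Σ` (as a subset of `ℂ^r`). -/
def GSet {n r : ℕ} (N : Fin r → Fin n → ℤ) : Set (Fin r → ℂ) :=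
  {μ | (∀ k, μ k ≠ 0) ∧ ∀ m : Fin n → ℤ, ∏ k, μ k ^ (∑ j, N k j * m j) = 1}

/-- The orbit relation of the `G_Σ`-action on `U(K_Σ)`. -/
def toricRel {n r : ℕ} (N : Fin r → Fin n → ℤ) (K : Set (Finset (Fin r)))
    (x y : ↥(UK K)) : Prop :=
  ∃ μ ∈ GSet N, (fun i => μ i * (x : Fin r → ℂ) i) = (y : Fin r → ℂ)

/-- The toric variety `X_Σ = U(K_Σ)/G_Σ`, as a topological quotient. -/
def XS {n r : ℕ} (N : Fin r → Fin n → ℤ) (K : Set (Finset (Fin r))) : Type :=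
  Quot (toricRel N K)

instance {n r : ℕ} (N : Fin r → Fin n → ℤ) (K : Set (Finset (Fin r))) :
    TopologicalSpace (XS N K) :=
  instTopologicalSpaceQuot

/-- The quotient map `q_Σ : U(K_Σ) → X_Σ`. -/
def qmap {n r : ℕ} (N : Fin r → Fin n → ℤ) (K : Set (Finset (Fin r))) :
    ↥(UK K) → XS N K :=
  Quot.mk (toricRel N K)

/-- `q_Σ` as a continuous map. -/
def qCont {n r : ℕ} (N : Fin r → Fin n → ℤ) (K : Set (Finset (Fin r))) :
    C(↥(UK K), XS N K) :=
  ⟨qmap N K, continuous_quot_mk⟩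

lemma coneIdx_empty {n r : ℕ} (N : Fin r → Fin n → ℤ) :
    coneIdx N (∅ : Finset (Fin r)) = ({0} : Set (Fin n → ℝ)) := by
  ext x
  constructor
  · rintro ⟨lam, -, hx⟩
    simpa using hx
  · intro hx
    exact ⟨0, fun i => le_refl 0, by simpa using hx⟩

lemma empty_mem_KC {n r : ℕ} (F : Fan n) (N : Fin r → Fin n → ℤ) :
    (∅ : Finset (Fin r)) ∈ KC F N := by
  show coneIdx N ∅ ∈ F.cones
  rw [coneIdx_empty]
  exact F.zero_mem

/-- The point `(1,…,1)`. -/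
def onesC {r : ℕ} : Fin r → ℂ := fun _ => 1

lemma ones_mem_UK {r : ℕ} {K : Set (Finset (Fin r))} (h : (∅ : Finset (Fin r)) ∈ K) :
    (onesC : Fin r → ℂ) ∈ UK K := by
  rw [mem_UK]
  intro σ hσ
  rcases Finset.nonempty_iff_ne_empty.2 (fun he : σ = ∅ => hσ (by rw [he]; exact h)) with ⟨i, hi⟩
  exact ⟨i, hi, one_ne_zero⟩

/-- The base point `(1,…,1)` of `U(K_Σ)`. -/
def onesUK {r : ℕ} {K : Set (Finset (Fin r))} (h : (∅ : Finset (Fin r)) ∈ K) : ↥(UK K) :=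
  ⟨onesC, ones_mem_UK h⟩

/-- The base point `[1,…,1]` of `X_Σ`. -/
def baseX {n r : ℕ} (N : Fin r → Fin n → ℤ) (K : Set (Finset (Fin r)))
    (h : (∅ : Finset (Fin r)) ∈ K) : XS N K :=
  qmap N K (onesUK h)



/-! ### Spaces of tuples of monic polynomials -/

/-- The monic polynomial `z^d + a_{d-1} z^{d-1} + ⋯ + a_0` with coefficient data `a`. -/
def toPoly {d : ℕ} (a : Fin d → ℂ) : Polynomial ℂ :=
  Polynomial.X ^ d + ∑ i : Fin d, Polynomial.C (a i) * Polynomial.X ^ (i : ℕ)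

/-- The space `Pol*_D(S¹, X_Σ)` of `r`-tuples of monic polynomials of multidegree `D`
(in coefficient coordinates) such that for every `σ ∉ K` the polynomials `{f_i : i ∈ σ}`
have no common real root. -/
def PolSp {r : ℕ} (K : Set (Finset (Fin r))) (D : Fin r → ℕ) :
    Set (∀ k : Fin r, Fin (D k) → ℂ) :=
  {f | ∀ σ : Finset (Fin r), σ ∉ K → ∀ t : ℝ,
        ∃ k ∈ σ, (toPoly (f k)).eval (t : ℂ) ≠ 0}

lemma polEval_mem_UK {r : ℕ} {K : Set (Finset (Fin r))} {D : Fin r → ℕ}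
    (f : ↥(PolSp K D)) (t : ℝ) :
    (fun k => (toPoly (f.1 k)).eval (t : ℂ)) ∈ UK K :=
  mem_UK.2 fun σ hσ => f.2 σ hσ t

/-! ### Loop spaces and induced maps on homotopy groups -/

/-- The loop space `Ω X = Map*(S¹, X)` with `S¹ = ℝ ∪ {∞}` (the one-point
compactification of `ℝ`), based at `x₀`. -/
def Loop (X : Type*) [TopologicalSpace X] (x₀ : X) : Type _ :=
  {γ : C(OnePoint ℝ, X) // γ OnePoint.infty = x₀}

instance {X : Type*} [TopologicalSpace X] (x₀ : X) : TopologicalSpace (Loop X x₀) :=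
  instTopologicalSpaceSubtype

/-- The constant loop, base point of `Ω X`. -/
def Loop.const {X : Type*} [TopologicalSpace X] (x₀ : X) : Loop X x₀ :=
  ⟨ContinuousMap.const _ x₀, rfl⟩

/-- A based continuous map induces a continuous map of loop spaces. -/
def loopMap {X Y : Type*} [TopologicalSpace X] [TopologicalSpace Y] {x₀ : X} {y₀ : Y}
    (f : C(X, Y)) (hf : f x₀ = y₀) : C(Loop X x₀, Loop Y y₀) where
  toFun γ := ⟨f.comp γ.1, by simp [γ.2, hf]⟩
  continuous_toFun := by
    apply Continuous.subtype_mk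
    exact (ContinuousMap.continuous_postcomp f).comp continuous_subtype_val

/-- The map induced by a continuous map on homotopy groups (`π_q`). -/
def piMap (q : ℕ) {X Y : Type*} [TopologicalSpace X] [TopologicalSpace Y]
    (f : C(X, Y)) (x : X) :
    HomotopyGroup (Fin q) X x → HomotopyGroup (Fin q) Y (f x) :=
  Quotient.map
    (fun p => ⟨f.comp p.1, fun y hy => by
      show f (p.1 y) = f x
      rw [p.2 y hy]⟩)
    (fun p₁ p₂ h => h.elim fun H => ⟨H.compContinuousMap f⟩)

/-- `f` is a homotopy equivalence through dimension `d`: it induces isomorphisms on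
`π_k` for all `k ≤ d` (at every base point). -/
def HomotopyEquivThrough {X Y : Type*} [TopologicalSpace X] [TopologicalSpace Y]
    (f : C(X, Y)) (d : ℤ) : Prop :=
  ∀ (x : X) (k : ℕ), (k : ℤ) ≤ d → Function.Bijective (piMap k f x)

/-- A genuine homotopy equivalence. -/
def IsHtpyEquiv {X Y : Type*} [TopologicalSpace X] [TopologicalSpace Y]
    (f : C(X, Y)) : Prop :=
  ∃ g : C(Y, X), (f.comp g).Homotopic (ContinuousMap.id Y) ∧
    (g.comp f).Homotopic (ContinuousMap.id X)

/-! ### `i_D`, lifts, and stabilization maps -/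

/-- `j : Pol*_D → Ω U(K_Σ)` is a lift of `i_D` through `Ω q_Σ`, i.e. `Ω q_Σ ∘ j = i_D`:
for every tuple `f` and real `t`, the loop `j f` at time `t` lies over the point
`[f_1(t), …, f_r(t)]` of `X_Σ` (and at `∞` over `[1,…,1]`, automatically). -/
def IsLiftOfID {n r : ℕ} (N : Fin r → Fin n → ℤ) (K : Set (Finset (Fin r)))
    (hE : (∅ : Finset (Fin r)) ∈ K) (D : Fin r → ℕ)
    (j : ↥(PolSp K D) → Loop ↥(UK K) (onesUK hE)) : Prop :=
  ∀ (f : ↥(PolSp K D)) (t : ℝ),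
    qmap N K ((j f).1 (t : OnePoint ℝ)) =
      qmap N K ⟨fun k => (toPoly (f.1 k)).eval (t : ℂ), polEval_mem_UK f t⟩

/-- `i : Pol*_D → Ω X_Σ` is the map `i_D` given by evaluation. -/
def IsID {n r : ℕ} (N : Fin r → Fin n → ℤ) (K : Set (Finset (Fin r)))
    (hE : (∅ : Finset (Fin r)) ∈ K) (D : Fin r → ℕ)
    (i : ↥(PolSp K D) → Loop (XS N K) (baseX N K hE)) : Prop :=
  ∀ (f : ↥(PolSp K D)) (t : ℝ),
    (i f).1 (t : OnePoint ℝ) =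
      qmap N K ⟨fun k => (toPoly (f.1 k)).eval (t : ℂ), polEval_mem_UK f t⟩

/-- `φ` is an admissible parameter for the stabilization maps: a homeomorphism of `ℂ`
onto the half plane `{Re < bound}` carrying `ℝ` onto `(-∞, bound)`. -/
def AdmissiblePhi (bound : ℝ) (φ : ℂ → ℂ) : Prop :=
  Continuous φ ∧ Function.Injective φ ∧ IsOpenMap φ ∧
    Set.range φ = {w : ℂ | w.re < bound} ∧
    φ '' {z : ℂ | z.im = 0} = {z : ℂ | z.im = 0 ∧ z.re < bound}

/-- The defining property of the stabilization map
`s_{D,D'}(f)_k = φ(f_k) · (z - x_k)^{d'_k - d_k}`, where `φ(f)` denotes the monic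
polynomial whose roots are the images under `φ` of the roots of `f`. -/
def StabSpec {r : ℕ} (K : Set (Finset (Fin r))) (φ : ℂ → ℂ) (xpt : Fin r → ℂ)
    (D D' : Fin r → ℕ) (s : ↥(PolSp K D) → ↥(PolSp K D')) : Prop :=
  ∀ (f : ↥(PolSp K D)) (k : Fin r),
    toPoly ((s f).1 k) =
      (((toPoly (f.1 k)).roots.map φ).map
        fun α => Polynomial.X - Polynomial.C α).prod
        * (Polynomial.X - Polynomial.C (xpt k)) ^ (D' k - D k)

/-- The general defining property of the map `j_D : Pol*_D → Ω U(K_Σ)`: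
when `∑ d_k n_k = 0` it is a lift of `i_D` through `Ω q_Σ`, and otherwise it is the
composite `j_{D₀} ∘ s_{D,D₀}` for a suitable `D₀ = m₀ D*` as in condition (2.9.1). -/
def IsJD {n r : ℕ} (N : Fin r → Fin n → ℤ) (K : Set (Finset (Fin r)))
    (hE : (∅ : Finset (Fin r)) ∈ K) (D : Fin r → ℕ)
    (j : C(↥(PolSp K D), Loop ↥(UK K) (onesUK hE))) : Prop :=
  ((∑ k, (D k : ℤ) • N k = 0) ∧ IsLiftOfID N K hE D j) ∨
  ((∑ k, (D k : ℤ) • N k ≠ 0) ∧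
    ∃ (dstar : Fin r → ℕ) (m₀ : ℕ),
      (∀ k, 0 < dstar k) ∧ (∑ k, (dstar k : ℤ) • N k = 0) ∧
      (∀ k, D k < m₀ * dstar k) ∧
      ∃ (φ : ℂ → ℂ) (xpt : Fin r → ℂ),
        AdmissiblePhi ((∑ k, D k : ℕ) : ℝ) φ ∧
        (∀ k, ((∑ k, D k : ℕ) : ℝ) < (xpt k).re) ∧ Function.Injective xpt ∧
        ∃ (j₀ : C(↥(PolSp K fun k => m₀ * dstar k), Loop ↥(UK K) (onesUK hE)))
          (s₀ : C(↥(PolSp K D), ↥(PolSp K fun k => m₀ * dstar k))),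
          IsLiftOfID N K hE _ j₀ ∧ StabSpec K φ xpt D _ s₀ ∧ j = j₀.comp s₀)

/-! ### Stabilized (colimit) spaces -/

/-- The multidegree `D + t·e`. -/
def Dt {r : ℕ} (D : Fin r → ℕ) (t : ℕ) : Fin r → ℕ := fun k => D k + t

/-- Carrier of the stabilized space: the disjoint union of the `Pol*_{D+te}`. -/
def ColCar {r : ℕ} (K : Set (Finset (Fin r))) (D : Fin r → ℕ) : Type :=
  Σ t : ℕ, ↥(PolSp K (Dt D t))

instance {r : ℕ} (K : Set (Finset (Fin r))) (D : Fin r → ℕ) :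
    TopologicalSpace (ColCar K D) := by
  unfold ColCar; infer_instance

/-- The identifications generating the colimit along the stabilization maps. -/
def ColRel {r : ℕ} (K : Set (Finset (Fin r))) (D : Fin r → ℕ)
    (s : ∀ t : ℕ, ↥(PolSp K (Dt D t)) → ↥(PolSp K (Dt D (t + 1)))) :
    ColCar K D → ColCar K D → Prop :=
  fun a b => b = ⟨a.1 + 1, s a.1 a.2⟩

/-- The stabilized space `Pol^Σ_{D+∞} = colim_t Pol*_{D+te}(S¹, X_Σ)`. -/
def PolColim {r : ℕ} (K : Set (Finset (Fin r))) (D : Fin r → ℕ)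
    (s : ∀ t : ℕ, ↥(PolSp K (Dt D t)) → ↥(PolSp K (Dt D (t + 1)))) : Type :=
  Quot (ColRel K D s)

instance {r : ℕ} (K : Set (Finset (Fin r))) (D : Fin r → ℕ)
    (s : ∀ t : ℕ, ↥(PolSp K (Dt D t)) → ↥(PolSp K (Dt D (t + 1)))) :
    TopologicalSpace (PolColim K D s) :=
  instTopologicalSpaceQuot

/-- Admissibility of a family of stabilization maps `s_{D+te}`. -/
def AdmissibleStabFamily {r : ℕ} (K : Set (Finset (Fin r))) (D : Fin r → ℕ)
    (s : ∀ t : ℕ, ↥(PolSp K (Dt D t)) → ↥(PolSp K (Dt D (t + 1)))) : Prop :=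
  ∀ t : ℕ, ∃ (φ : ℂ → ℂ) (xpt : Fin r → ℂ),
    AdmissiblePhi ((∑ k, Dt D t k : ℕ) : ℝ) φ ∧
    (∀ k, ((∑ k, Dt D t k : ℕ) : ℝ) < (xpt k).re) ∧ Function.Injective xpt ∧
    StabSpec K φ xpt (Dt D t) (Dt D (t + 1)) (s t)

/-!
A continuous map `s` induces isomorphisms on `π_k` for all `k < M` as soon as it has the cube
lifting property in every dimension `m ≤ M`: a cube in the target whose boundary is lifted along
`s` is homotopic, relative to its boundary, to the image of a cube extending that lift. Write
`ρ = r_min(Σ)` and `q = d_min`; the lifting property holds in every dimension `m < 2(ρ - 1)q`.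

Moving the points `x_k` to the common position `i`, the stabilization map becomes homotopic to the
action of `φ` on roots followed by multiplications by powers of `z - i`. The first map has the
lifting property in all dimensions, since a translation brings the roots of a compact family into
the half plane. The second one is a composite of maps multiplying a single component `f_j` by
`z - i`, whose images are cut out by `f_j(i) = 0`.

For such a step, one would like to deform `f_j` to `f_j - i p` with `p` a real polynomial such that
`i p(i) = f_j(i)`. This can only fail at the bad times: the real `t` with `Re f_j(t) = 0` at which
enough of the other components vanish. They impose at least `2(ρ - 1) + 1` real conditions on the
tuple and have one parameter, so that, for `m < 2(ρ - 1)q`, a generic `m`-parameter family has fewer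
than `q` bad times in each tuple: the exceptions form the `C¹` image of a space of too small
dimension. Then `p` can be interpolated so that `p` and `Im f_j` have opposite signs at the bad
times, where the deformation moves `f_j` away from `0`. The admissible `p` form an open and convex
condition, and a partition of unity chooses them continuously along the cube.
-/

section Cube

open Set Topology
open scoped unitInterval

variable {ι : Type*} {Y : Type*} [TopologicalSpace Y]

/-- Dilation of the cube by the factor `1 / c` from its centre, clamped to the cube. -/
def cubeDilate (c : ℝ) (y : I^ι) : I^ι := fun i =>
  projIcc 0 1 zero_le_one (((2 * (y i : ℝ) - 1) / c + 1) / 2)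

lemma cubeDilate_one (y : I^ι) : cubeDilate 1 y = y := by
  funext i
  have h : ((2 * (y i : ℝ) - 1) / 1 + 1) / 2 = y i := by ring
  rw [cubeDilate, h]
  exact projIcc_val zero_le_one (y i)

lemma continuous_cubeDilate {Z : Type*} [TopologicalSpace Z] {c : Z → ℝ} {y : Z → I^ι}
    (hc : Continuous c) (hy : Continuous y) (h : ∀ z, c z ≠ 0) :
    Continuous fun z => cubeDilate (c z) (y z) := by
  refine continuous_pi fun i => continuous_projIcc.comp ?_
  have hi : Continuous fun z => (y z i : ℝ) := by fun_prop
  exact ((((continuous_const.mul hi).sub continuous_const).div hc h).add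
    continuous_const).div_const _

/-- The bottom and the walls of the cylinder `I × I^ι`. -/
def cubeShell (ι : Type*) : Set (I × I^ι) := {p | p.1 = 0 ∨ p.2 ∈ Cube.boundary ι}

section Fintype

variable [Fintype ι]

/-- The sup norm of a point of the cube in the coordinates that identify the cube with
`[-1, 1]^ι`; the boundary of the cube is the level set `1`. -/
def cubeRadius (y : I^ι) : ℝ := ‖fun i => 2 * (y i : ℝ) - 1‖

lemma continuous_cubeRadius : Continuous (cubeRadius (ι := ι)) := by
  unfold cubeRadius; fun_prop

lemma abs_le_cubeRadius (y : I^ι) (i : ι) : |2 * (y i : ℝ) - 1| ≤ cubeRadius y :=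
  norm_le_pi_norm (fun i => 2 * (y i : ℝ) - 1) i

lemma cubeRadius_le_one (y : I^ι) : cubeRadius y ≤ 1 := by
  refine (pi_norm_le_iff_of_nonneg zero_le_one).2 fun i => ?_
  rw [Real.norm_eq_abs, abs_le]
  constructor <;> linarith [(y i).2.1, (y i).2.2]

lemma cubeRadius_of_mem_boundary {y : I^ι} (hy : y ∈ Cube.boundary ι) : cubeRadius y = 1 := by
  obtain ⟨i, hi⟩ := hy
  refine le_antisymm (cubeRadius_le_one y) (le_trans ?_ (abs_le_cubeRadius y i))
  rcases hi with h | h <;> rw [h] <;> norm_num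

lemma cubeDilate_cubeRadius_mem_boundary {y : I^ι} (hy : 0 < cubeRadius y) :
    cubeDilate (cubeRadius y) y ∈ Cube.boundary ι := by
  obtain ⟨i, hi⟩ : ∃ i, cubeRadius y ≤ |2 * (y i : ℝ) - 1| := by
    by_contra! h
    exact ((pi_norm_lt_iff hy).2 h).false
  replace hi := hi.antisymm (abs_le_cubeRadius y i)
  refine ⟨i, ?_⟩
  rcases abs_cases (2 * (y i : ℝ) - 1) with ⟨h, -⟩ | ⟨h, -⟩
  · have hq : (2 * (y i : ℝ) - 1) / cubeRadius y = 1 := by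
      rw [div_eq_one_iff_eq hy.ne', hi, h]
    exact Or.inr (projIcc_of_right_le zero_le_one (by rw [hq]; norm_num))
  · have hq : (2 * (y i : ℝ) - 1) / cubeRadius y = -1 := by
      rw [div_eq_iff hy.ne', hi, h]; ring
    exact Or.inl (projIcc_of_le_left zero_le_one (by rw [hq]; norm_num))

lemma mem_boundary_iff_cubeRadius {y : I^ι} : y ∈ Cube.boundary ι ↔ cubeRadius y = 1 := by
  refine ⟨cubeRadius_of_mem_boundary, fun h => ?_⟩
  have := cubeDilate_cubeRadius_mem_boundary (y := y) (by rw [h]; exact one_pos)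
  rwa [h, cubeDilate_one] at this

/-- The retraction of the cylinder `I × I^ι` onto its bottom and walls: at height `t` the
concentric cube of radius `1 / (1 + t)` is stretched over the bottom and the complementary
collar is folded onto the walls. -/
def cubeCollapse : C(I × I^ι, I × I^ι) where
  toFun p :=
    (projIcc 0 1 zero_le_one ((1 + (p.1 : ℝ)) * cubeRadius p.2 - 1),
      cubeDilate (max (cubeRadius p.2) (1 / (1 + (p.1 : ℝ)))) p.2)
  continuous_toFun := by
    have hR : Continuous fun p : I × I^ι => cubeRadius p.2 :=
      continuous_cubeRadius.comp continuous_snd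
    have ht (p : I × I^ι) : 0 < 1 + (p.1 : ℝ) := by linarith [p.1.2.1]
    refine (continuous_projIcc.comp (by fun_prop)).prodMk
      (continuous_cubeDilate (hR.max ?_) continuous_snd fun p => ?_)
    · exact continuous_const.div (by fun_prop) fun p => (ht p).ne'
    · exact (lt_max_of_lt_right (one_div_pos.2 (ht p))).ne'

lemma cubeCollapse_mem_shell (p : I × I^ι) : cubeCollapse p ∈ cubeShell ι := by
  have ht : 0 < 1 + (p.1 : ℝ) := by linarith [p.1.2.1]
  rcases le_total (cubeRadius p.2) (1 / (1 + (p.1 : ℝ))) with h | h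
  · left
    rw [le_div_iff₀' ht] at h
    exact projIcc_of_le_left zero_le_one (by linarith)
  · right
    change cubeDilate (max (cubeRadius p.2) (1 / (1 + (p.1 : ℝ)))) p.2 ∈ _
    rw [max_eq_left h]
    exact cubeDilate_cubeRadius_mem_boundary ((one_div_pos.2 ht).trans_le h)

lemma cubeCollapse_of_mem_shell {p : I × I^ι} (hp : p ∈ cubeShell ι) : cubeCollapse p = p := by
  obtain ⟨t, y⟩ := p
  have ht : 1 ≤ 1 + (t : ℝ) := by linarith [t.2.1]
  rcases hp with rfl | hy
  · have hR := cubeRadius_le_one y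
    refine Prod.ext (projIcc_of_le_left zero_le_one (by simpa using hR)) ?_
    simp [cubeCollapse, max_eq_right hR, cubeDilate_one]
  · have hR := cubeRadius_of_mem_boundary hy
    refine Prod.ext ?_ ?_
    · simp [cubeCollapse, hR]
    · simp [cubeCollapse, hR, max_eq_left (inv_le_one_of_one_le₀ ht), cubeDilate_one]

-- The cylinder is convex, so the identity is homotopic to the collapse through segments.
lemma homotopicRel_comp_collapse {A B : C(I^ι, Y)} (K : A.Homotopy B) :
    B.HomotopicRel (((K : C(I × I^ι, Y)).comp cubeCollapse).curry 1) (Cube.boundary ι) := by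
  let seg (q : I × I^ι) : I × I^ι :=
    (Icc.convexComb 1 (cubeCollapse (1, q.2)).1 q.1,
      fun i => Icc.convexComb (q.2 i) ((cubeCollapse (1, q.2)).2 i) q.1)
  have hcollapse : Continuous fun q : I × I^ι => cubeCollapse (1, q.2) := by fun_prop
  have hseg : Continuous seg := by
    refine (Icc.continuous_convexComb_prod.comp
      (continuous_const.prodMk (hcollapse.fst.prodMk continuous_fst))).prodMk
      (continuous_pi fun i => Icc.continuous_convexComb_prod.comp
        (((continuous_apply i).comp continuous_snd).prodMk
          (((continuous_apply i).comp hcollapse.snd).prodMk continuous_fst)))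
  refine ⟨⟨⟨⟨fun q => K (seg q), K.continuous.comp hseg⟩, fun y => ?_, fun y => ?_⟩,
    fun t y hy => ?_⟩⟩
  · simp [seg]
  · simp [seg]
  · have hfix : cubeCollapse (1, y) = (1, y) := cubeCollapse_of_mem_shell (Or.inr hy)
    simp [seg, hfix]

end Fintype

variable [Finite ι]

lemma isClosed_cubeBoundary : IsClosed (Cube.boundary ι) := by
  cases nonempty_fintype ι
  have h : Cube.boundary ι = {y | cubeRadius y = 1} :=
    Set.ext fun _ => mem_boundary_iff_cubeRadius
  rw [h]
  exact isClosed_eq continuous_cubeRadius continuous_const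

lemma homotopicRel_of_homotopy_eqOn {A B B' : C(I^ι, Y)} (K : A.Homotopy B) (K' : A.Homotopy B')
    (h : ∀ t, ∀ y ∈ Cube.boundary ι, K (t, y) = K' (t, y)) :
    B.HomotopicRel B' (Cube.boundary ι) := by
  cases nonempty_fintype ι
  have hshell : ∀ p ∈ cubeShell ι, K p = K' p := by
    rintro ⟨t, y⟩ (rfl | hy)
    · rw [K.apply_zero, K'.apply_zero]
    · exact h t y hy
  have hcomp : (K : C(I × I^ι, Y)).comp cubeCollapse = (K' : C(I × I^ι, Y)).comp cubeCollapse :=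
    ContinuousMap.ext fun p => hshell _ (cubeCollapse_mem_shell p)
  have hK := homotopicRel_comp_collapse K
  rw [hcomp] at hK
  exact hK.trans (homotopicRel_comp_collapse K').symm

lemma exists_homotopicRel_mem_of_homotopicWith {A : Set Y} {F F' : C(I^ι, Y)}
    (H : F.HomotopicWith F' fun f => ∀ y ∈ Cube.boundary ι, f y ∈ A) (hF' : ∀ y, F' y ∈ A) :
    ∃ g : C(I^ι, Y), (∀ y, g y ∈ A) ∧ F.HomotopicRel g (Cube.boundary ι) := by
  cases nonempty_fintype ι
  obtain ⟨H⟩ := H.symm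
  refine ⟨_, fun y => ?_, homotopicRel_comp_collapse H.toHomotopy⟩
  change H (cubeCollapse (1, y)) ∈ A
  rcases hp : cubeCollapse (1, y) with ⟨t, z⟩
  rcases hp ▸ cubeCollapse_mem_shell (1, y) with ht | hz
  · obtain rfl : t = 0 := ht
    rw [H.apply_zero]
    exact hF' z
  · exact H.prop t z hz

lemma exists_homotopy_extension (F : C(I^ι, Y)) (h : C(I × Cube.boundary ι, Y))
    (h₀ : ∀ y, h (0, y) = F y) :
    ∃ (F' : C(I^ι, Y)) (K : F.Homotopy F'), ∀ t (y : Cube.boundary ι), K (t, y) = h (t, y) := by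
  cases nonempty_fintype ι
  let f (p : I × I^ι) : Y := if hp : p.2 ∈ Cube.boundary ι then h (p.1, ⟨p.2, hp⟩) else F p.2
  have f_wall (t : I) (y : Cube.boundary ι) : f (t, y) = h (t, y) := dif_pos y.2
  have f_bottom (y : I^ι) : f (0, y) = F y := by
    by_cases hy : y ∈ Cube.boundary ι
    · exact (f_wall 0 ⟨y, hy⟩).trans (h₀ ⟨y, hy⟩)
    · exact dif_neg hy
  have hf : ContinuousOn f (cubeShell ι) := by
    refine ContinuousOn.union_of_isClosed (s := {p : I × I^ι | p.1 = 0})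
      (t := {p : I × I^ι | p.2 ∈ Cube.boundary ι}) ?_ ?_
      (isClosed_eq continuous_fst continuous_const) (isClosed_cubeBoundary.preimage continuous_snd)
    · refine (F.continuous.comp continuous_snd).continuousOn.congr ?_
      rintro ⟨t, y⟩ ht
      obtain rfl : t = 0 := ht
      exact f_bottom y
    · rw [continuousOn_iff_continuous_domRestrict]
      refine (h.continuous.comp ((continuous_fst.comp continuous_subtype_val).prodMk
        ((continuous_snd.comp continuous_subtype_val).subtype_mk fun p => p.2))).congr ?_
      exact fun p => (f_wall p.1.1 ⟨p.1.2, p.2⟩).symm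
  let K : C(I × I^ι, Y) := ⟨fun p => f (cubeCollapse p),
    hf.comp_continuous cubeCollapse.continuous cubeCollapse_mem_shell⟩
  refine ⟨K.curry 1, ⟨K, fun y => ?_, fun y => rfl⟩, fun t y => ?_⟩
  · change f (cubeCollapse (0, y)) = F y
    rw [cubeCollapse_of_mem_shell (Or.inl rfl), f_bottom]
  · change f (cubeCollapse (t, y)) = h (t, y)
    rw [cubeCollapse_of_mem_shell (Or.inr y.2), f_wall]

end Cube

section CubeLifting

open scoped unitInterval Topology

variable {ι : Type*} {X Y Z : Type*} [TopologicalSpace X] [TopologicalSpace Y]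
  [TopologicalSpace Z]

/-- `s` has the lifting property for the pair `(I^ι, ∂I^ι)`: every map of the cube to `Y` whose
boundary values are lifted along `s` lifts, relative to the boundary, up to homotopy.
For all cubes of dimension at most `d` this says that `s` is `d`-connected. -/
def HasCubeLifting (ι : Type*) (s : C(X, Y)) : Prop :=
  ∀ (F : C(I^ι, Y)) (G : C(Cube.boundary ι, X)),
    (∀ y : Cube.boundary ι, F y = s (G y)) →
    ∃ g : C(I^ι, X), (∀ y : Cube.boundary ι, g y = G y) ∧
      (s.comp g).HomotopicRel F (Cube.boundary ι)

namespace HasCubeLifting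

lemma comp {s : C(X, Y)} {s' : C(Y, Z)} (h' : HasCubeLifting ι s') (h : HasCubeLifting ι s) :
    HasCubeLifting ι (s'.comp s) := by
  intro F G hFG
  obtain ⟨g', hg', H'⟩ := h' F (s.comp G) hFG
  obtain ⟨g, hg, H⟩ := h g' G hg'
  exact ⟨g, hg, (H.comp_continuousMap s').trans H'⟩

lemma of_homotopic [Finite ι] {s s' : C(X, Y)} (h : HasCubeLifting ι s) (hs : s.Homotopic s') :
    HasCubeLifting ι s' := by
  intro F G hFG
  obtain ⟨H⟩ := hs
  obtain ⟨F', K, hK⟩ := exists_homotopy_extension F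
    ⟨fun p : I × Cube.boundary ι => H.symm (p.1, G p.2), by fun_prop⟩ (by simp [hFG])
  obtain ⟨g, hg, ⟨L⟩⟩ := h F' G fun y => by
    rw [← K.apply_one, hK]; simp
  refine ⟨g, hg, (homotopicRel_of_homotopy_eqOn (L.toHomotopy.trans K.symm)
    ((ContinuousMap.Homotopy.refl _).trans (H.compContinuousMap g)) fun t y hy => ?_).symm⟩
  rw [ContinuousMap.Homotopy.trans_apply, ContinuousMap.Homotopy.trans_apply]
  split_ifs
  · exact L.eq_fst _ hy
  · change K (σ _, y) = H (_, g y)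
    rw [hK _ ⟨y, hy⟩, hg ⟨y, hy⟩]
    exact congrArg (fun t => H (t, G ⟨y, hy⟩)) (unitInterval.symm_symm _)

lemma of_homotopicWith_mem [Finite ι] (s : C(X, Y)) (A : Set Y) (ρ : C(A, X))
    (hsA : ∀ x, s x ∈ A) (hρs : ∀ x, ρ ⟨s x, hsA x⟩ = x) (hsρ : ∀ a : A, s (ρ a) = a)
    (H : ∀ F : C(I^ι, Y), (∀ y ∈ Cube.boundary ι, F y ∈ A) →
      ∃ F' : C(I^ι, Y), (∀ y, F' y ∈ A) ∧
        F.HomotopicWith F' fun f => ∀ y ∈ Cube.boundary ι, f y ∈ A) :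
    HasCubeLifting ι s := by
  intro F G hFG
  obtain ⟨F', hF', hFF'⟩ := H F fun y hy => by rw [hFG ⟨y, hy⟩]; exact hsA _
  obtain ⟨g, hgA, hg⟩ := exists_homotopicRel_mem_of_homotopicWith hFF' hF'
  let g' : C(I^ι, X) := ρ.comp ⟨fun y => ⟨g y, hgA y⟩, g.continuous.subtype_mk _⟩
  have hsg : s.comp g' = g := ContinuousMap.ext fun y => hsρ ⟨g y, hgA y⟩
  refine ⟨g', fun y => ?_, hsg ▸ hg.symm⟩
  have hy : g y = s (G y) := by rw [← hFG y]; exact (hg.fst_eq_snd y.2).symm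
  rw [← hρs (G y)]
  exact congrArg ρ (Subtype.ext hy)

lemma of_isEmbedding [Finite ι] {s : C(X, Y)} (hs : Topology.IsEmbedding s)
    (H : ∀ F : C(I^ι, Y), (∀ y ∈ Cube.boundary ι, F y ∈ Set.range s) →
      ∃ F' : C(I^ι, Y), (∀ y, F' y ∈ Set.range s) ∧
        F.HomotopicWith F' fun f => ∀ y ∈ Cube.boundary ι, f y ∈ Set.range s) :
    HasCubeLifting ι s :=
  let ρ : C(Set.range s, X) := ⟨hs.toHomeomorph.symm, hs.toHomeomorph.symm.continuous⟩
  .of_homotopicWith_mem s (Set.range s) ρ Set.mem_range_self hs.toHomeomorph.symm_apply_apply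
    (fun a => congrArg Subtype.val (hs.toHomeomorph.apply_symm_apply a)) H

end HasCubeLifting

lemma piMap_surjective_of_hasCubeLifting {k : ℕ} {s : C(X, Y)} (h : HasCubeLifting (Fin k) s)
    (x : X) : Function.Surjective (piMap k s x) := by
  rintro ⟨F⟩
  obtain ⟨g, hg, H⟩ := h F.1 (ContinuousMap.const _ x) fun y => F.2 y y.2
  exact ⟨Quotient.mk _ ⟨g, fun y hy => hg ⟨y, hy⟩⟩, Quotient.sound H⟩

lemma cons_mem_cubeBoundary_iff {k : ℕ} {t : I} {y : I^(Fin k)} :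
    (Fin.cons t y : I^(Fin (k + 1))) ∈ Cube.boundary (Fin (k + 1)) ↔
      (t = 0 ∨ t = 1) ∨ y ∈ Cube.boundary (Fin k) := by
  simp [Cube.boundary, Fin.exists_fin_succ]

lemma exists_boundary_map_of_ends {k : ℕ} (γ₀ γ₁ : C(I^(Fin k), X))
    (h : ∀ y ∈ Cube.boundary (Fin k), γ₀ y = γ₁ y) :
    ∃ G : C(Cube.boundary (Fin (k + 1)), X),
      (∀ z : Cube.boundary (Fin (k + 1)), z.1 0 = 0 → G z = γ₀ (Fin.tail z.1)) ∧
      (∀ z : Cube.boundary (Fin (k + 1)), z.1 0 = 1 → G z = γ₁ (Fin.tail z.1)) ∧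
      ∀ z : Cube.boundary (Fin (k + 1)), Fin.tail z.1 ∈ Cube.boundary (Fin k) →
        G z = γ₀ (Fin.tail z.1) := by
  have htail : Continuous fun z : Cube.boundary (Fin (k + 1)) => (Fin.tail z.1 : I^(Fin k)) :=
    continuous_pi fun i => (continuous_apply _).comp continuous_subtype_val
  have hhead : Continuous fun z : Cube.boundary (Fin (k + 1)) => (z.1 0 : ℝ) :=
    continuous_subtype_val.comp ((continuous_apply 0).comp continuous_subtype_val)
  refine ⟨⟨fun z => if (z.1 0 : ℝ) ≤ 1 / 2 then γ₀ (Fin.tail z.1) else γ₁ (Fin.tail z.1), ?_⟩,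
    fun z hz => ?_, fun z hz => ?_, fun z hz => ?_⟩
  · refine Continuous.if_le (γ₀.continuous.comp htail) (γ₁.continuous.comp htail) hhead
      continuous_const fun z hz => h _ ?_
    have hmem := z.2
    rw [← Fin.cons_self_tail z.1, cons_mem_cubeBoundary_iff] at hmem
    refine hmem.resolve_left ?_
    rintro (h0 | h0) <;> norm_num [h0] at hz
  · exact if_pos (by norm_num [hz])
  · exact if_neg (by norm_num [hz])
  · change ite _ _ _ = _
    rw [← h _ hz, ite_self]

lemma piMap_injective_of_hasCubeLifting {k : ℕ} {s : C(X, Y)}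
    (h : HasCubeLifting (Fin (k + 1)) s) (x : X) : Function.Injective (piMap k s x) := by
  rintro ⟨γ₀⟩ ⟨γ₁⟩ hγ
  obtain ⟨H⟩ := Quotient.exact hγ
  obtain ⟨G, hG₀, hG₁, hGb⟩ := exists_boundary_map_of_ends γ₀.1 γ₁.1
    fun y hy => (γ₀.2 y hy).trans (γ₁.2 y hy).symm
  have htail : Continuous fun z : I^(Fin (k + 1)) => (Fin.tail z : I^(Fin k)) :=
    continuous_pi fun i => continuous_apply _
  let F : C(I^(Fin (k + 1)), Y) :=
    ⟨fun z => H (z 0, Fin.tail z), H.continuous.comp ((continuous_apply 0).prodMk htail)⟩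
  have hFG : ∀ z : Cube.boundary (Fin (k + 1)), F z = s (G z) := by
    intro z
    change H (z.1 0, Fin.tail z.1) = s (G z)
    have hmem := z.2
    rw [← Fin.cons_self_tail z.1, cons_mem_cubeBoundary_iff] at hmem
    rcases hmem with (h0 | h1) | hb
    · rw [hG₀ z h0, h0, H.apply_zero]; rfl
    · rw [hG₁ z h1, h1, H.apply_one]; rfl
    · rw [hGb z hb]; exact H.eq_fst _ hb
  obtain ⟨g, hg, -⟩ := h F G hFG
  have hcons : Continuous fun p : I × I^(Fin k) => (Fin.cons p.1 p.2 : I^(Fin (k + 1))) :=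
    continuous_pi (Fin.cases continuous_fst fun i => (continuous_apply i).comp continuous_snd)
  refine Quotient.sound ⟨⟨⟨⟨fun p => g (Fin.cons p.1 p.2), g.continuous.comp hcons⟩,
    fun y => ?_, fun y => ?_⟩, fun t y hy => ?_⟩⟩
  · exact (hg ⟨_, cons_mem_cubeBoundary_iff.2 (.inl (.inl rfl))⟩).trans (hG₀ _ rfl)
  · exact (hg ⟨_, cons_mem_cubeBoundary_iff.2 (.inl (.inr rfl))⟩).trans (hG₁ _ rfl)
  · exact (hg ⟨_, cons_mem_cubeBoundary_iff.2 (.inr hy)⟩).trans (hGb _ hy)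

end CubeLifting

section PolynomialFamilies

open Polynomial

variable {Z : Type*} {A : Subalgebra ℂ (Z → ℂ)}

/-- The families of polynomials all of whose coefficients lie in the algebra `A` of functions of
the parameter: for `A` the continuous functions, the families that vary continuously. -/
def polyFamily (A : Subalgebra ℂ (Z → ℂ)) : Subalgebra ℂ (Z → ℂ[X]) where
  carrier := {p | ∀ n, (fun z => (p z).coeff n) ∈ A}
  add_mem' hp hq n := by
    simp only [Pi.add_apply, coeff_add]
    exact (add_mem (hp n) (hq n) :)
  mul_mem' {p q} hp hq n := by
    have h : (fun z => ((p * q) z).coeff n) = ∑ x ∈ Finset.HasAntidiagonal.antidiagonal n,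
        (fun z => (p z).coeff x.1) * fun z => (q z).coeff x.2 := by
      ext z; simp [coeff_mul]
    rw [h]
    exact sum_mem fun x _ => mul_mem (hp x.1) (hq x.2)
  algebraMap_mem' c n := algebraMap_mem A ((algebraMap ℂ ℂ[X] c).coeff n)

lemma const_mem_polyFamily (p : ℂ[X]) : (fun _ => p) ∈ polyFamily A :=
  fun n => algebraMap_mem A (p.coeff n)

lemma C_mem_polyFamily {c : Z → ℂ} (hc : c ∈ A) : (fun z => C (c z)) ∈ polyFamily A := by
  rintro (_ | n)
  · simpa only [coeff_C_zero] using hc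
  · simp only [coeff_C_succ]
    exact zero_mem A

lemma X_sub_C_mem_polyFamily {c : Z → ℂ} (hc : c ∈ A) :
    (fun z => X - C (c z)) ∈ polyFamily A :=
  (sub_mem (const_mem_polyFamily X) (C_mem_polyFamily hc) :)

lemma ofFn_mem_polyFamily {d : ℕ} {a : Z → Fin d → ℂ} (ha : ∀ i, (fun z => a z i) ∈ A) :
    (fun z => ofFn d (a z)) ∈ polyFamily A := by
  intro n
  rcases lt_or_ge n d with h | h
  · simpa only [ofFn_coeff_eq_val_of_lt _ h] using ha ⟨n, h⟩
  · simp only [ofFn_coeff_eq_zero_of_ge _ h]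
    exact zero_mem A

lemma eval_mem_of_mem_polyFamily {p : Z → ℂ[X]} (hp : p ∈ polyFamily A) {c : Z → ℂ}
    (hc : c ∈ A) {d : ℕ} (hd : ∀ z, (p z).natDegree ≤ d) : (fun z => (p z).eval (c z)) ∈ A := by
  have h : (fun z => (p z).eval (c z)) =
      ∑ i ∈ Finset.range (d + 1), (fun z => (p z).coeff i) * c ^ i := by
    ext z
    simp [eval_eq_sum_range' (Nat.lt_succ_of_le (hd z))]
  rw [h]
  exact sum_mem fun i _ => mul_mem (hp i) (pow_mem hc i)

lemma taylor_mem_polyFamily {p : Z → ℂ[X]} (hp : p ∈ polyFamily A) {c : Z → ℂ}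
    (hc : c ∈ A) {d : ℕ} (hd : ∀ z, (p z).natDegree ≤ d) :
    (fun z => taylor (c z) (p z)) ∈ polyFamily A := by
  have h : (fun z => taylor (c z) (p z)) = ∑ i ∈ Finset.range (d + 1),
      (fun z => C ((p z).coeff i)) * ((fun _ => X) + fun z => C (c z)) ^ i := by
    ext1 z
    rw [taylor_apply, comp, eval₂_eq_sum_range' _ (Nat.lt_succ_of_le (hd z))]
    simp
  rw [h]
  exact sum_mem fun i _ => mul_mem (C_mem_polyFamily (hp i))
    (pow_mem (add_mem (const_mem_polyFamily X) (C_mem_polyFamily hc)) i)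

/-- The families of polynomials whose coefficients depend continuously on the parameter. -/
abbrev continuousFamily (Z : Type*) [TopologicalSpace Z] : Subalgebra ℂ (Z → ℂ[X]) :=
  polyFamily (continuousSubalgebra (R := ℂ))

lemma continuous_toFn_of_mem [TopologicalSpace Z] {p : Z → ℂ[X]} (hp : p ∈ continuousFamily Z)
    (d : ℕ) : Continuous fun z => toFn d (p z) :=
  continuous_pi fun i => hp i

lemma toPoly_eq_X_pow_add {d : ℕ} (a : Fin d → ℂ) : toPoly a = X ^ d + ofFn d a := by
  simp [toPoly, ofFn_eq_sum_monomial, C_mul_X_pow_eq_monomial]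

lemma isMonicOfDegree_toPoly {d : ℕ} (a : Fin d → ℂ) : IsMonicOfDegree (toPoly a) d := by
  rw [toPoly_eq_X_pow_add]
  refine ⟨?_, monic_X_pow_add (ofFn_degree_lt a)⟩
  refine natDegree_eq_of_degree_eq_some ?_
  rw [degree_add_eq_left_of_degree_lt (by simpa using ofFn_degree_lt a), degree_X_pow]

lemma toFn_toPoly {d : ℕ} (a : Fin d → ℂ) : toFn d (toPoly a) = a := by
  rw [toPoly_eq_X_pow_add, map_add, toFn_comp_ofFn_eq_id, add_eq_right]
  ext i
  exact (coeff_X_pow d i).trans (if_neg i.2.ne)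

lemma toPoly_injective {d : ℕ} : Function.Injective (toPoly (d := d)) :=
  Function.LeftInverse.injective toFn_toPoly

lemma toPoly_toFn {d : ℕ} {p : ℂ[X]} (hp : IsMonicOfDegree p d) : toPoly (toFn d p) = p := by
  obtain ⟨rfl, hm⟩ := hp
  conv_rhs => rw [hm.as_sum]
  rw [toPoly, ← Fin.sum_univ_eq_sum_range (fun i => C (p.coeff i) * X ^ i)]
  rfl

lemma ofFn_toFn_of_degree_lt {R : Type*} [Semiring R] [DecidableEq R] {d : ℕ} {p : R[X]}
    (hp : p.degree < d) : ofFn d (toFn d p) = p := by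
  ext i
  rcases lt_or_ge i d with hi | hi
  · exact ofFn_coeff_eq_val_of_lt _ hi
  · rw [ofFn_coeff_eq_zero_of_ge _ hi,
      coeff_eq_zero_of_degree_lt (hp.trans_le (by exact_mod_cast hi))]

lemma toPoly_add_toFn {d : ℕ} (a : Fin d → ℂ) {p : ℂ[X]} (hp : p.degree < d) :
    toPoly (a + toFn d p) = toPoly a + p := by
  rw [toPoly_eq_X_pow_add, toPoly_eq_X_pow_add, map_add, ofFn_toFn_of_degree_lt hp, add_assoc]

lemma toPoly_mem_polyFamily {d : ℕ} {a : Z → Fin d → ℂ} (ha : ∀ i, (fun z => a z i) ∈ A) :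
    (fun z => toPoly (a z)) ∈ polyFamily A := by
  simp only [toPoly_eq_X_pow_add]
  exact (add_mem (const_mem_polyFamily (X ^ d)) (ofFn_mem_polyFamily ha) :)

lemma toPoly_mem_continuousFamily [TopologicalSpace Z] {d : ℕ} {a : Z → Fin d → ℂ}
    (ha : Continuous a) : (fun z => toPoly (a z)) ∈ continuousFamily Z :=
  toPoly_mem_polyFamily fun i => (continuous_apply i).comp ha

lemma continuous_eval_toPoly [TopologicalSpace Z] {d : ℕ} {a : Z → Fin d → ℂ} {c : Z → ℂ}
    (ha : Continuous a) (hc : Continuous c) : Continuous fun z => (toPoly (a z)).eval (c z) :=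
  eval_mem_of_mem_polyFamily (A := continuousSubalgebra (R := ℂ)) (toPoly_mem_continuousFamily ha)
    hc fun z => (isMonicOfDegree_toPoly (a z)).natDegree_eq.le

lemma norm_lt_of_eval_toPoly_eq_zero {d : ℕ} {a : Fin d → ℂ} {z : ℂ}
    (h : (toPoly a).eval z = 0) : ‖z‖ < ‖a‖ + 1 := by
  have ha := isMonicOfDegree_toPoly a
  have hz : ‖z‖₊ < cauchyBound (toPoly a) := IsRoot.norm_lt_cauchyBound ha.ne_zero h
  refine lt_of_lt_of_le (NNReal.coe_lt_coe.2 hz) ?_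
  rw [cauchyBound, ha.natDegree_eq, ha.leadingCoeff_eq, nnnorm_one, div_one, NNReal.coe_add,
    NNReal.coe_one, add_le_add_iff_right]
  refine NNReal.coe_le_coe.2 (Finset.sup_le fun i hi => ?_ : _ ≤ ‖a‖₊)
  have hai : (toPoly a).coeff i = a ⟨i, Finset.mem_range.1 hi⟩ :=
    congrFun (toFn_toPoly a) ⟨i, Finset.mem_range.1 hi⟩
  rw [hai]
  exact nnnorm_le_pi_nnnorm a _

section PolSp

variable {r : ℕ} {K : Set (Finset (Fin r))} {D : Fin r → ℕ}

lemma norm_lt_of_eval_component_eq_zero {f : ∀ k, Fin (D k) → ℂ} {k : Fin r} {z : ℂ}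
    (h : (toPoly (f k)).eval z = 0) : ‖z‖ < ‖f‖ + 1 := by
  linarith [norm_lt_of_eval_toPoly_eq_zero h, norm_le_pi_norm f k]

-- Real roots are bounded locally uniformly in the tuple, so only a compact interval matters.
lemma isOpen_PolSp (hK : ∀ σ, σ ∉ K → σ.Nonempty) : IsOpen (PolSp K D) := by
  rw [isOpen_iff_mem_nhds]
  intro f hf
  have hball : ∀ᶠ g in nhds f, ‖g‖ < ‖f‖ + 1 :=
    continuous_norm.continuousAt.eventually_lt_const (lt_add_one ‖f‖)
  have hinterval : ∀ σ : Finset (Fin r), ∀ᶠ g in nhds f, σ ∉ K →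
      ∀ t ∈ Set.Icc (-(‖f‖ + 2)) (‖f‖ + 2), ∃ k ∈ σ, (toPoly (g k)).eval ((t : ℝ) : ℂ) ≠ 0 := by
    intro σ
    by_cases hσ : σ ∈ K
    · exact Filter.Eventually.of_forall fun g h => (h hσ).elim
    refine (isCompact_Icc.eventually_forall_of_forall_eventually fun t _ => ?_).mono fun g h _ => h
    obtain ⟨k, hk, hne⟩ := hf σ hσ t
    have hcont : Continuous fun p : (∀ k : Fin r, Fin (D k) → ℂ) × ℝ =>
        (toPoly (p.1 k)).eval ((p.2 : ℝ) : ℂ) :=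
      continuous_eval_toPoly ((continuous_apply k).comp continuous_fst)
        (Complex.continuous_ofReal.comp continuous_snd)
    exact (hcont.continuousAt.eventually_ne hne).mono fun p hp => ⟨k, hk, hp⟩
  filter_upwards [hball, Filter.eventually_all.2 hinterval] with g hg hroots σ hσ t
  by_cases ht : t ∈ Set.Icc (-(‖f‖ + 2)) (‖f‖ + 2)
  · exact hroots σ hσ t ht
  · obtain ⟨k, hk⟩ := hK σ hσ
    refine ⟨k, hk, fun h0 => ht (abs_le.1 ?_)⟩
    have := norm_lt_of_eval_component_eq_zero h0
    rw [Complex.norm_real, Real.norm_eq_abs] at this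
    linarith

end PolSp

end PolynomialFamilies

section Roots

open Polynomial

variable {d : ℕ}

/-- The coefficients of the monic polynomial `∏ i, (z - α i)`. -/
def ofRoots (α : Fin d → ℂ) : Fin d → ℂ := toFn d (∏ i, (X - C (α i)))

lemma toPoly_ofRoots (α : Fin d → ℂ) : toPoly (ofRoots α) = ∏ i, (X - C (α i)) := by
  refine toPoly_toFn ⟨?_, monic_prod_of_monic _ _ fun i _ => monic_X_sub_C _⟩
  rw [natDegree_prod_of_monic _ _ fun i _ => monic_X_sub_C _]
  simp

lemma roots_toPoly_ofRoots (α : Fin d → ℂ) :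
    (toPoly (ofRoots α)).roots = Finset.univ.val.map α := by
  rw [toPoly_ofRoots]
  have h := roots_multiset_prod_X_sub_C (Finset.univ.val.map α)
  rwa [Multiset.map_map] at h

lemma eval_toPoly_ofRoots_eq_zero {α : Fin d → ℂ} {z : ℂ} :
    (toPoly (ofRoots α)).eval z = 0 ↔ ∃ i, α i = z := by
  rw [toPoly_ofRoots, eval_prod, Finset.prod_eq_zero_iff]
  simp [sub_eq_zero, eq_comm]

lemma continuous_ofRoots : Continuous (ofRoots (d := d)) := by
  have h : (∏ i, fun α : Fin d → ℂ => X - C (α i)) ∈ continuousFamily (Fin d → ℂ) :=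
    prod_mem fun i _ => X_sub_C_mem_polyFamily (continuous_apply i)
  have hcont := continuous_toFn_of_mem h d
  simp only [Finset.prod_apply] at hcont
  exact hcont

lemma ofRoots_surjective : Function.Surjective (ofRoots (d := d)) := by
  intro a
  obtain ⟨l, hl⟩ : ∃ l : List ℂ, (l : Multiset ℂ) = (toPoly a).roots := Quot.exists_rep _
  have hlen : l.length = d := by
    rw [← Multiset.coe_card, hl, splits_iff_card_roots.1 (IsAlgClosed.splits (toPoly a)),
      (isMonicOfDegree_toPoly a).natDegree_eq]
  subst hlen
  refine ⟨l.get, toPoly_injective ?_⟩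
  rw [(IsAlgClosed.splits (toPoly a)).eq_prod_roots_of_monic (isMonicOfDegree_toPoly a).monic,
    ← hl, Multiset.map_coe, Multiset.prod_coe, toPoly_ofRoots]
  conv_rhs => rw [← List.ofFn_get l]
  rw [List.map_ofFn, List.prod_ofFn]
  rfl

lemma isClosedMap_ofRoots : IsClosedMap (ofRoots (d := d)) := by
  refine (isProperMap_iff_tendsto_cocompact.2 ⟨continuous_ofRoots,
    Filter.tendsto_cocompact_cocompact_of_norm fun ε => ⟨ε + 1, fun α hα => ?_⟩⟩).isClosedMap
  have hbound : ‖α‖ ≤ ‖ofRoots α‖ + 1 :=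
    (pi_norm_le_iff_of_nonneg (by positivity)).2 fun i =>
      (norm_lt_of_eval_toPoly_eq_zero (eval_toPoly_ofRoots_eq_zero.2 ⟨i, rfl⟩)).le
  linarith

/-- The monic polynomial whose roots are the images under `g` of the roots of the monic
polynomial with coefficients `a`. -/
def mapRoots (g : ℂ → ℂ) (a : Fin d → ℂ) : Fin d → ℂ :=
  toFn d (((toPoly a).roots.map g).map fun α => X - C α).prod

lemma mapRoots_ofRoots (g : ℂ → ℂ) (α : Fin d → ℂ) :
    mapRoots g (ofRoots α) = ofRoots fun i => g (α i) := by
  rw [mapRoots, roots_toPoly_ofRoots, Multiset.map_map, Multiset.map_map]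
  rfl

lemma toPoly_mapRoots (g : ℂ → ℂ) (a : Fin d → ℂ) :
    toPoly (mapRoots g a) = (((toPoly a).roots.map g).map fun α => X - C α).prod := by
  obtain ⟨α, rfl⟩ := ofRoots_surjective a
  rw [mapRoots_ofRoots, roots_toPoly_ofRoots, toPoly_ofRoots, Multiset.map_map, Multiset.map_map]
  rfl

lemma eval_toPoly_mapRoots_eq_zero {g : ℂ → ℂ} {a : Fin d → ℂ} {z : ℂ} :
    (toPoly (mapRoots g a)).eval z = 0 ↔ ∃ w, (toPoly a).eval w = 0 ∧ g w = z := by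
  obtain ⟨α, rfl⟩ := ofRoots_surjective a
  simp only [mapRoots_ofRoots, eval_toPoly_ofRoots_eq_zero, exists_exists_eq_and]

lemma mapRoots_mapRoots_of_leftInvOn {g h : ℂ → ℂ} {a : Fin d → ℂ}
    (hgh : ∀ w, (toPoly a).eval w = 0 → h (g w) = w) : mapRoots h (mapRoots g a) = a := by
  obtain ⟨α, rfl⟩ := ofRoots_surjective a
  rw [mapRoots_ofRoots, mapRoots_ofRoots]
  congr 1
  exact funext fun i => hgh _ (eval_toPoly_ofRoots_eq_zero.2 ⟨i, rfl⟩)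

-- `ofRoots` is a closed surjection, hence a quotient map also over any set of polynomials, and
-- `mapRoots g` is induced by applying `g` to each coordinate.
lemma continuousOn_mapRoots {g : ℂ → ℂ} {U : Set ℂ} (hg : ContinuousOn g U) :
    ContinuousOn (mapRoots (d := d) g) {a | ∀ z, (toPoly a).eval z = 0 → z ∈ U} := by
  set S : Set (Fin d → ℂ) := {a | ∀ z, (toPoly a).eval z = 0 → z ∈ U}
  have hquot : Topology.IsQuotientMap (S.restrictPreimage ofRoots) :=
    (isClosedMap_ofRoots.restrictPreimage S).isQuotientMap continuous_ofRoots.restrictPreimage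
      (S.restrictPreimage_surjective ofRoots_surjective)
  have hcomp : S.domRestrict (mapRoots g) ∘ S.restrictPreimage ofRoots =
      fun α => ofRoots fun i => g (α.1 i) :=
    funext fun α => mapRoots_ofRoots g α.1
  rw [continuousOn_iff_continuous_domRestrict, hquot.continuous_iff, hcomp]
  refine continuous_ofRoots.comp (continuous_pi fun i => ?_)
  exact hg.comp_continuous ((continuous_apply i).comp continuous_subtype_val) fun α =>
    α.2 _ (eval_toPoly_ofRoots_eq_zero.2 ⟨i, rfl⟩)

lemma continuous_mapRoots {g : ℂ → ℂ} (hg : Continuous g) :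
    Continuous (mapRoots (d := d) g) := by
  simpa using continuousOn_mapRoots (d := d) hg.continuousOn (U := Set.univ)

end Roots
section RootMaps

open Polynomial

variable {r : ℕ} {K : Set (Finset (Fin r))} {D : Fin r → ℕ}

/-- The tuples in `PolSp K D` all of whose roots lie in `U`. -/
def rootsIn (K : Set (Finset (Fin r))) (D : Fin r → ℕ) (U : Set ℂ) : Set (PolSp K D) :=
  {f | ∀ k z, (toPoly (f.1 k)).eval z = 0 → z ∈ U}

lemma mapRoots_mem_PolSp {U : Set ℂ} {g : ℂ → ℂ} {f : PolSp K D} (hf : f ∈ rootsIn K D U)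
    (hinj : U.InjOn g) (hreal : ∀ z ∈ U, (g z).im = 0 → z.im = 0)
    (hK : ∀ σ, σ ∉ K → σ.Nonempty) : (fun k => mapRoots g (f.1 k)) ∈ PolSp K D := by
  intro σ hσ t
  by_contra! h
  choose! w hw hgw using fun k hk => eval_toPoly_mapRoots_eq_zero.1 (h k hk)
  obtain ⟨l, hl⟩ := hK σ hσ
  have hlU : w l ∈ U := hf l _ (hw l hl)
  have hw_real : (w l).im = 0 := hreal _ hlU (by rw [hgw l hl, Complex.ofReal_im])
  obtain ⟨k, hk, hne⟩ := f.2 σ hσ (w l).re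
  have hkl : w k = w l := hinj (hf k _ (hw k hk)) hlU ((hgw k hk).trans (hgw l hl).symm)
  have hre : ((w l).re : ℂ) = w l := Complex.ext rfl hw_real.symm
  rw [hre, ← hkl] at hne
  exact hne (hw k hk)

namespace AdmissiblePhi

variable {N : ℝ} {φ : ℂ → ℂ}

lemma re_lt (hφ : AdmissiblePhi N φ) (z : ℂ) : (φ z).re < N :=
  hφ.2.2.2.1.subset ⟨z, rfl⟩

lemma im_eq_zero_iff (hφ : AdmissiblePhi N φ) {z : ℂ} : (φ z).im = 0 ↔ z.im = 0 := by
  obtain ⟨-, hinj, -, -, himage⟩ := id hφ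
  refine ⟨fun h => ?_, fun h => (himage.subset ⟨z, h, rfl⟩).1⟩
  obtain ⟨w, hw, hwz⟩ := himage.superset ⟨h, hφ.re_lt z⟩
  exact hinj hwz ▸ hw

lemma exists_inverse (hφ : AdmissiblePhi N φ) :
    ∃ ψ : ℂ → ℂ, Function.LeftInverse ψ φ ∧ Set.LeftInvOn φ ψ {z | z.re < N} ∧
      ContinuousOn ψ {z | z.re < N} := by
  obtain ⟨-, hinj, hopen, hrange, -⟩ := hφ
  have hleft := Function.leftInverse_invFun hinj
  rw [← hrange]
  refine ⟨Function.invFun φ, hleft, ?_, hopen.continuousOn_range_of_leftInverse hleft⟩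
  rintro _ ⟨w, rfl⟩
  rw [hleft]

end AdmissiblePhi

/-- The self-map `(f_k) ↦ (φ(f_k))` of `PolSp K D`. -/
def rootMap (K : Set (Finset (Fin r))) (D : Fin r → ℕ) {N : ℝ} {φ : ℂ → ℂ}
    (hφ : AdmissiblePhi N φ) (hK : ∀ σ, σ ∉ K → σ.Nonempty) : C(PolSp K D, PolSp K D) where
  toFun f := ⟨fun k => mapRoots φ (f.1 k),
    mapRoots_mem_PolSp (U := Set.univ) (fun _ _ _ => trivial) hφ.2.1.injOn
      (fun _ _ => hφ.im_eq_zero_iff.1) hK⟩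
  continuous_toFun := by
    refine (continuous_pi fun k => (continuous_mapRoots hφ.1).comp ?_).subtype_mk _
    exact (continuous_apply k).comp continuous_subtype_val

/-- The coefficients of `f(z + c)`, where `f` is the monic polynomial with coefficients `a`. -/
def taylorCoeffs {d : ℕ} (c : ℂ) (a : Fin d → ℂ) : Fin d → ℂ := toFn d (taylor c (toPoly a))

lemma toPoly_taylorCoeffs {d : ℕ} (c : ℂ) (a : Fin d → ℂ) :
    toPoly (taylorCoeffs c a) = taylor c (toPoly a) := by
  have ha := isMonicOfDegree_toPoly a
  exact toPoly_toFn ⟨(natDegree_taylor _ c).trans ha.natDegree_eq,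
    (leadingCoeff_taylor c _).trans ha.leadingCoeff_eq⟩

lemma continuous_taylorCoeffs {Z : Type*} [TopologicalSpace Z] {d : ℕ} {c : Z → ℂ}
    {a : Z → Fin d → ℂ} (hc : Continuous c) (ha : Continuous a) :
    Continuous fun z => taylorCoeffs (c z) (a z) :=
  continuous_toFn_of_mem (taylor_mem_polyFamily (toPoly_mem_continuousFamily ha) hc
    fun z => (isMonicOfDegree_toPoly (a z)).natDegree_eq.le) d

lemma taylorCoeffs_mem_PolSp {f : ∀ k, Fin (D k) → ℂ} (hf : f ∈ PolSp K D) (c : ℝ) :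
    (fun k => taylorCoeffs (c : ℂ) (f k)) ∈ PolSp K D := by
  intro σ hσ t
  obtain ⟨k, hk, hne⟩ := hf σ hσ (t + c)
  refine ⟨k, hk, ?_⟩
  rwa [toPoly_taylorCoeffs, taylor_eval, ← Complex.ofReal_add]

/-- Translation of all roots: the pair `(c, f)` is sent to the tuple of the polynomials
`f_k(z + c)`. -/
def translateRoots (K : Set (Finset (Fin r))) (D : Fin r → ℕ) :
    C(ℝ × PolSp K D, PolSp K D) where
  toFun p := ⟨fun k => taylorCoeffs (p.1 : ℂ) (p.2.1 k), taylorCoeffs_mem_PolSp p.2.2 p.1⟩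
  continuous_toFun := by
    refine (continuous_pi fun k => continuous_taylorCoeffs ?_ ?_).subtype_mk _
    · exact Complex.continuous_ofReal.comp continuous_fst
    · exact (continuous_apply k).comp (continuous_subtype_val.comp continuous_snd)

lemma toPoly_translateRoots (c : ℝ) (f : PolSp K D) (k : Fin r) :
    toPoly ((translateRoots K D (c, f)).1 k) = taylor (c : ℂ) (toPoly (f.1 k)) :=
  toPoly_taylorCoeffs _ _

lemma translateRoots_mem_rootsIn_re_lt {M N c : ℝ} {f : PolSp K D}
    (hf : f ∈ rootsIn K D {z | z.re < M}) (h : M ≤ N + c) :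
    translateRoots K D (c, f) ∈ rootsIn K D {z | z.re < N} := by
  intro k z hz
  rw [toPoly_translateRoots, taylor_eval] at hz
  have hre : z.re + c < M := hf k _ hz
  exact lt_of_add_lt_add_right (hre.trans_le h)

lemma exists_homotopicWith_rootsIn_re_lt {Y : Type*} [TopologicalSpace Y] [CompactSpace Y]
    (N : ℝ) (F : C(Y, PolSp K D)) {B : Set Y} (hF : ∀ y ∈ B, F y ∈ rootsIn K D {z | z.re < N}) :
    ∃ F' : C(Y, PolSp K D), (∀ y, F' y ∈ rootsIn K D {z | z.re < N}) ∧
      F.HomotopicWith F' fun f => ∀ y ∈ B, f y ∈ rootsIn K D {z | z.re < N} := by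
  obtain ⟨T, hT⟩ := isCompact_univ.exists_bound_of_continuousOn
    (continuous_subtype_val.comp F.continuous).continuousOn
  have hbound (y : Y) : F y ∈ rootsIn K D {z | z.re < T + 1} := fun k z hz =>
    (Complex.re_le_norm z).trans_lt
      ((norm_lt_of_eval_component_eq_zero hz).trans_le (by gcongr; exact hT y trivial))
  let c : ℝ := |T + 1| + |N|
  let H : C(unitInterval × Y, PolSp K D) :=
    (translateRoots K D).comp ⟨fun p => (p.1 * c, F p.2), by fun_prop⟩
  refine ⟨(translateRoots K D).comp ⟨fun y => (c, F y), by fun_prop⟩, fun y => ?_,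
    ⟨⟨⟨H, fun y => ?_, fun y => ?_⟩, fun t y hy => ?_⟩⟩⟩
  · exact translateRoots_mem_rootsIn_re_lt (hbound y)
      (by linarith [le_abs_self (T + 1), neg_abs_le N])
  · refine Subtype.ext (funext fun k => toPoly_injective ?_)
    simp [H, toPoly_translateRoots]
  · simp [H]
  · refine translateRoots_mem_rootsIn_re_lt (hF y hy) (le_add_of_nonneg_right ?_)
    exact mul_nonneg t.2.1 (by positivity)

lemma hasCubeLifting_rootMap {ι : Type*} [Finite ι] {N : ℝ} {φ : ℂ → ℂ}
    (hφ : AdmissiblePhi N φ) (hK : ∀ σ, σ ∉ K → σ.Nonempty) :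
    HasCubeLifting ι (rootMap K D hφ hK) := by
  obtain ⟨ψ, hψφ, hφψ, hψ⟩ := hφ.exists_inverse
  have hψ_mem (a : rootsIn K D {z | z.re < N}) :
      (fun k => mapRoots ψ (a.1.1 k)) ∈ PolSp K D := by
    refine mapRoots_mem_PolSp a.2 hφψ.injOn (fun z hz h => ?_) hK
    rwa [← hφψ hz, hφ.im_eq_zero_iff]
  have hψ_cont : Continuous fun a : rootsIn K D {z | z.re < N} =>
      (⟨_, hψ_mem a⟩ : PolSp K D) := by
    refine (continuous_pi fun k => (continuousOn_mapRoots hψ).comp_continuous ?_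
      fun a => a.2 k).subtype_mk _
    exact (continuous_apply k).comp (continuous_subtype_val.comp continuous_subtype_val)
  refine .of_homotopicWith_mem _ (rootsIn K D {z | z.re < N}) ⟨_, hψ_cont⟩ (fun f k z hz => ?_)
    (fun f => ?_) (fun a => ?_) fun F hF => exists_homotopicWith_rootsIn_re_lt N F hF
  · obtain ⟨w, -, rfl⟩ := eval_toPoly_mapRoots_eq_zero.1 hz
    exact hφ.re_lt w
  · exact Subtype.ext (funext fun k => mapRoots_mapRoots_of_leftInvOn fun w _ => hψφ w)
  · exact Subtype.ext (funext fun k =>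
      mapRoots_mapRoots_of_leftInvOn fun w hw => hφψ (a.2 k w hw))

end RootMaps
section Multiplication

open Polynomial

variable {r : ℕ} {K : Set (Finset (Fin r))} {D D' : Fin r → ℕ}

/-- The coefficients, in degree `e`, of `f(z) * (z - x) ^ (e - d)`, where `f` is the monic
polynomial of degree `d` with coefficients `a`. -/
def mulPow {d : ℕ} (e : ℕ) (x : ℂ) (a : Fin d → ℂ) : Fin e → ℂ :=
  toFn e (toPoly a * (X - C x) ^ (e - d))

lemma toPoly_mulPow {d e : ℕ} (h : d ≤ e) (x : ℂ) (a : Fin d → ℂ) :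
    toPoly (mulPow e x a) = toPoly a * (X - C x) ^ (e - d) := by
  have := (isMonicOfDegree_toPoly a).mul ((isMonicOfDegree_X_sub_one x).pow (e - d))
  rw [one_mul, Nat.add_sub_of_le h] at this
  exact toPoly_toFn this

lemma eval_toPoly_mulPow_eq_zero {d e : ℕ} (h : d ≤ e) {x : ℂ} {a : Fin d → ℂ} {z : ℂ}
    (hz : (toPoly (mulPow e x a)).eval z = 0) : (toPoly a).eval z = 0 ∨ x = z := by
  rw [toPoly_mulPow h, eval_mul, eval_pow, mul_eq_zero] at hz
  refine hz.imp_right fun hx => ?_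
  simpa [sub_eq_zero, eq_comm] using eq_zero_of_pow_eq_zero hx

lemma continuous_mulPow {Z : Type*} [TopologicalSpace Z] {d : ℕ} (e : ℕ) {x : Z → ℂ}
    {a : Z → Fin d → ℂ} (hx : Continuous x) (ha : Continuous a) :
    Continuous fun z => mulPow e (x z) (a z) :=
  continuous_toFn_of_mem (mul_mem (toPoly_mem_continuousFamily ha)
    (pow_mem (X_sub_C_mem_polyFamily hx) (e - d)) :) e

lemma mulPow_I_mem_PolSp (hle : D ≤ D') (f : PolSp K D) :
    (fun k => mulPow (D' k) Complex.I (f.1 k)) ∈ PolSp K D' := by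
  intro σ hσ t
  obtain ⟨k, hk, hne⟩ := f.2 σ hσ t
  refine ⟨k, hk, fun h => (eval_toPoly_mulPow_eq_zero (hle k) h).elim hne fun hI => ?_⟩
  simpa using congrArg Complex.im hI

/-- Multiplication of each component by the power of `z - i` that raises its degree from `D k`
to `D' k`. -/
def mulI (K : Set (Finset (Fin r))) (hle : D ≤ D') : C(PolSp K D, PolSp K D') where
  toFun f := ⟨fun k => mulPow (D' k) Complex.I (f.1 k), mulPow_I_mem_PolSp hle f⟩
  continuous_toFun := by
    refine (continuous_pi fun k => continuous_mulPow (D' k) continuous_const ?_).subtype_mk _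
    exact (continuous_apply k).comp continuous_subtype_val

lemma toPoly_mulI (hle : D ≤ D') (f : PolSp K D) (k : Fin r) :
    toPoly ((mulI K hle f).1 k) = toPoly (f.1 k) * (X - C Complex.I) ^ (D' k - D k) :=
  toPoly_mulPow (hle k) _ _

lemma mulI_refl : mulI K (le_refl D) = ContinuousMap.id (PolSp K D) := by
  refine ContinuousMap.ext fun f => Subtype.ext (funext fun k => toPoly_injective ?_)
  rw [toPoly_mulI, Nat.sub_self, pow_zero, mul_one, ContinuousMap.id_apply]

lemma mulI_trans {D'' : Fin r → ℕ} (h : D ≤ D') (h' : D' ≤ D'') :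
    mulI K (h.trans h') = (mulI K h').comp (mulI K h) := by
  refine ContinuousMap.ext fun f => Subtype.ext (funext fun k => toPoly_injective ?_)
  rw [ContinuousMap.comp_apply, toPoly_mulI, toPoly_mulI, toPoly_mulI, mul_assoc, ← pow_add]
  congr 2
  have hk : D k ≤ D' k := h k
  have hk' : D' k ≤ D'' k := h' k
  omega

lemma hasCubeLifting_mulI_of_covBy {ι : Type*} {q : ℕ}
    (hstep : ∀ {D E : Fin r → ℕ} (h : D ⋖ E), (∀ k, q ≤ D k) → HasCubeLifting ι (mulI K h.le))
    (hle : D ≤ D') (hq : ∀ k, q ≤ D k) : HasCubeLifting ι (mulI K hle) := by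
  have hchain := le_iff_reflTransGen_covBy.1 hle
  induction hchain with
  | refl =>
    rw [mulI_refl]
    exact fun F G hFG => ⟨F, hFG, ContinuousMap.HomotopicRel.refl _⟩
  | @tail E E' hDE hcov ih =>
    have hle' : D ≤ E := le_iff_reflTransGen_covBy.2 hDE
    rw [mulI_trans hle' hcov.le]
    exact (hstep hcov fun k => (hq k).trans (hle' k)).comp (ih hle')

section Stabilization

variable {N : ℝ} {φ : ℂ → ℂ}

/-- The tuples of points by which one may multiply the components of a tuple with roots in the
half plane `{re < N}` without creating common real roots. -/
def multiplierPoints (r : ℕ) (N : ℝ) : Set (Fin r → ℂ) :=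
  {x | ∀ k, (x k).im = 0 → N < (x k).re ∧ ∀ l, x k = x l → k = l}

lemma mem_multiplierPoints_of_im_pos {x : Fin r → ℂ} (hx : ∀ k, 0 < (x k).im) :
    x ∈ multiplierPoints r N :=
  fun k hk => absurd hk (ne_of_gt (hx k))

-- First all points are pushed into the upper half plane by a common vertical translation, which
-- keeps them distinct; there they can be moved freely.
lemma joinedIn_multiplierPoints {x : Fin r → ℂ} (hx : ∀ k, N < (x k).re)
    (hinj : Function.Injective x) :
    JoinedIn (multiplierPoints r N) x fun _ => Complex.I := by
  obtain ⟨T, hT⟩ : ∃ T : ℝ, ∀ k, 0 < (x k).im + T := by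
    refine ⟨‖x‖ + 1, fun k => ?_⟩
    have := (Complex.abs_im_le_norm (x k)).trans (norm_le_pi_norm x k)
    linarith [neg_abs_le (x k).im]
  have hvertical : JoinedIn (multiplierPoints r N) x fun k => x k + T * Complex.I := by
    refine JoinedIn.ofLine (f := fun u k => x k + (u * T : ℝ) * Complex.I) (by fun_prop)
      (by simp) (by simp) ?_
    rintro _ ⟨u, -, rfl⟩ k -
    exact ⟨by simpa using hx k, fun l hkl => hinj (add_right_cancel hkl)⟩
  have hconv : Convex ℝ {y : Fin r → ℂ | ∀ k, 0 < (y k).im} := by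
    simp only [Set.ofPred_forall]
    exact convex_iInter fun k => convex_halfSpace_im_gt 0 |>.is_linear_preimage
      (LinearMap.proj k : (Fin r → ℂ) →ₗ[ℝ] ℂ).isLinear
  refine hvertical.trans (JoinedIn.of_segment_subset
    ((hconv.segment_subset ?_ ?_).trans fun y => mem_multiplierPoints_of_im_pos))
  · simpa using hT
  · simp

lemma mulPow_mapRoots_mem_PolSp (hle : D ≤ D') (hφ : AdmissiblePhi N φ)
    (hK : ∀ σ, σ ∉ K → 1 < σ.card) {x : Fin r → ℂ} (hx : x ∈ multiplierPoints r N)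
    (f : PolSp K D) :
    (fun k => mulPow (D' k) (x k) (mapRoots φ (f.1 k))) ∈ PolSp K D' := by
  intro σ hσ t
  by_contra! hzero
  have hK' : ∀ σ, σ ∉ K → σ.Nonempty := fun σ hσ => Finset.card_pos.1 (zero_lt_one.trans (hK σ hσ))
  obtain ⟨k, hk, hne⟩ := (rootMap K D hφ hK' f).2 σ hσ t
  have hkt : x k = t := (eval_toPoly_mulPow_eq_zero (hle k) (hzero k hk)).resolve_left hne
  obtain ⟨hre, hdistinct⟩ := hx k (by simp [hkt])
  obtain ⟨l, hl, hlk⟩ := Finset.exists_mem_ne (hK σ hσ) k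
  rcases eval_toPoly_mulPow_eq_zero (hle l) (hzero l hl) with hroot | hlt
  · obtain ⟨w, -, hw⟩ := eval_toPoly_mapRoots_eq_zero.1 hroot
    exact (hφ.re_lt w).not_gt (by rwa [hw, ← hkt])
  · exact hlk (hdistinct l (hkt.trans hlt.symm)).symm

lemma homotopic_of_stabSpec (hle : D ≤ D') (hφ : AdmissiblePhi N φ)
    (hK : ∀ σ, σ ∉ K → 1 < σ.card) (hK' : ∀ σ, σ ∉ K → σ.Nonempty) {x : Fin r → ℂ}
    (hx : JoinedIn (multiplierPoints r N) x fun _ => Complex.I)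
    {s : C(PolSp K D, PolSp K D')} (hs : StabSpec K φ x D D' s) :
    s.Homotopic ((mulI K hle).comp (rootMap K D hφ hK')) := by
  obtain ⟨γ, hγ⟩ := hx
  have hcont : Continuous fun p : unitInterval × PolSp K D =>
      (⟨_, mulPow_mapRoots_mem_PolSp hle hφ hK (hγ p.1) p.2⟩ : PolSp K D') := by
    refine (continuous_pi fun k => continuous_mulPow (D' k) ?_
      ((continuous_mapRoots hφ.1).comp ?_)).subtype_mk _
    · exact (continuous_apply k).comp (γ.continuous.comp continuous_fst)
    · exact (continuous_apply k).comp (continuous_subtype_val.comp continuous_snd)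
  refine ⟨⟨⟨_, hcont⟩, fun f => ?_, fun f => ?_⟩⟩
  · refine Subtype.ext (funext fun k => toPoly_injective ?_)
    rw [hs f k, toPoly_mulPow (hle k), toPoly_mapRoots, γ.source]
  · simp only [γ.target]
    rfl

lemma hasCubeLifting_of_stabSpec {ι : Type*} [Finite ι] (hle : D ≤ D') (hφ : AdmissiblePhi N φ)
    (hK : ∀ σ, σ ∉ K → 1 < σ.card) {x : Fin r → ℂ} (hx : ∀ k, N < (x k).re)
    (hinj : Function.Injective x) {s : C(PolSp K D, PolSp K D')}
    (hs : StabSpec K φ x D D' s) (hmul : HasCubeLifting ι (mulI K hle)) :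
    HasCubeLifting ι s := by
  have hK' : ∀ σ, σ ∉ K → σ.Nonempty := fun σ hσ => Finset.card_pos.1 (zero_lt_one.trans (hK σ hσ))
  exact (hmul.comp (hasCubeLifting_rootMap hφ hK')).of_homotopic
    (homotopic_of_stabSpec hle hφ hK hK' (joinedIn_multiplierPoints hx hinj) hs).symm

end Stabilization

end Multiplication

section BadTimes

open Polynomial Topology

variable {r : ℕ} {K : Set (Finset (Fin r))} {E : Fin r → ℕ} {j : Fin r}
  {f : ∀ k, Fin (E k) → ℂ} {Z : Type*} [TopologicalSpace Z]

/-- The real times at which moving `f_j` in the imaginary direction may leave `PolSp K E`: the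
value `f_j(t)` is purely imaginary, and the other members of some family indexed by a non-simplex
containing `j` all vanish. -/
def IsBadTime (K : Set (Finset (Fin r))) (j : Fin r) (f : ∀ k, Fin (E k) → ℂ) (t : ℝ) : Prop :=
  ((toPoly (f j)).eval (t : ℂ)).re = 0 ∧
    ∃ τ : Finset (Fin r), j ∉ τ ∧ insert j τ ∉ K ∧ ∀ k ∈ τ, (toPoly (f k)).eval (t : ℂ) = 0

lemma IsBadTime.im_ne_zero (hf : f ∈ PolSp K E) {t : ℝ} (h : IsBadTime K j f t) :
    ((toPoly (f j)).eval (t : ℂ)).im ≠ 0 := by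
  obtain ⟨hre, τ, -, hτ, hzero⟩ := h
  obtain ⟨k, hk, hne⟩ := hf _ hτ t
  rcases Finset.mem_insert.1 hk with rfl | hk
  · exact fun him => hne (Complex.ext hre him)
  · exact (hne (hzero k hk)).elim

lemma IsBadTime.abs_lt (hK : ∀ σ, σ ∉ K → 1 < σ.card) {t : ℝ} (h : IsBadTime K j f t) :
    |t| < ‖f‖ + 1 := by
  obtain ⟨-, τ, hj, hτ, hzero⟩ := h
  obtain ⟨k, hk⟩ : τ.Nonempty := by
    have hcard := hK _ hτ
    rw [Finset.card_insert_of_notMem hj] at hcard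
    exact Finset.card_pos.1 (by omega)
  simpa using norm_lt_of_eval_component_eq_zero (hzero k hk)

lemma isClosed_setOf_isBadTime {f : Z → ∀ k, Fin (E k) → ℂ} {t : Z → ℝ} (hf : Continuous f)
    (ht : Continuous t) : IsClosed {z | IsBadTime K j (f z) (t z)} := by
  have heval : ∀ k, Continuous fun z => (toPoly (f z k)).eval (t z : ℂ) := fun k =>
    continuous_eval_toPoly ((continuous_apply k).comp hf) (Complex.continuous_ofReal.comp ht)
  have hset : {z | IsBadTime K j (f z) (t z)} = {z | ((toPoly (f z j)).eval (t z : ℂ)).re = 0} ∩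
      ⋃ τ : {τ : Finset (Fin r) // j ∉ τ ∧ insert j τ ∉ K},
        ⋂ k ∈ τ.1, {z | (toPoly (f z k)).eval (t z : ℂ) = 0} := by
    ext z
    simp [IsBadTime, and_assoc]
  rw [hset]
  exact (isClosed_eq (Complex.continuous_re.comp (heval j)) continuous_const).inter
    (isClosed_iUnion_of_finite fun τ => isClosed_biInter fun k _ =>
      isClosed_eq (heval k) continuous_const)

end BadTimes

section Correction

open Polynomial Topology

variable {n : ℕ} {Z : Type*} [TopologicalSpace Z]

/-- The real polynomials of degree at most `n + 1` with value `-i v` at `i`, parametrized by the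
coefficients of their quotient by `X² + 1`. -/
def correctionPoly (v : ℂ) (w : Fin n → ℝ) : ℝ[X] :=
  C v.im - C v.re * X + (X ^ 2 + 1) * ofFn n w

lemma aeval_I_correctionPoly (v : ℂ) (w : Fin n → ℝ) :
    aeval Complex.I (correctionPoly v w) = -(Complex.I * v) := by
  apply Complex.ext <;> simp [correctionPoly]

lemma degree_correctionPoly_lt (v : ℂ) (w : Fin n → ℝ) :
    (correctionPoly v w).degree < (n + 2 : ℕ) := by
  refine (degree_add_le _ _).trans_lt (max_lt ((degree_sub_le _ _).trans_lt (max_lt ?_ ?_)) ?_)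
  · exact degree_C_le.trans_lt (by exact_mod_cast Nat.succ_pos (n + 1))
  · exact (degree_C_mul_X_le _).trans_lt (by exact_mod_cast Nat.succ_lt_succ n.succ_pos)
  · rw [mul_comm, degree_mul, ← C_1, degree_X_pow_add_C two_pos, Nat.cast_add]
    exact WithBot.add_lt_add_right (by simp) (ofFn_degree_lt w)

lemma correctionPoly_convexCombination {a b : ℝ} (hab : a + b = 1) (v : ℂ) (w w' : Fin n → ℝ) :
    correctionPoly v (a • w + b • w') = a • correctionPoly v w + b • correctionPoly v w' := by
  obtain rfl : a = 1 - b := by linarith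
  simp only [correctionPoly, map_add, map_smul, smul_eq_C_mul, C_sub, C_1]
  ring

lemma map_ofFn_ofReal (w : Fin n → ℝ) :
    (ofFn n w).map (algebraMap ℝ ℂ) = ofFn n fun i => (w i : ℂ) := by
  simp [ofFn_eq_sum_monomial, Polynomial.map_sum]

lemma correctionPoly_mem_continuousFamily {v : Z → ℂ} {w : Z → Fin n → ℝ} (hv : Continuous v)
    (hw : Continuous w) :
    (fun z => (correctionPoly (v z) (w z)).map (algebraMap ℝ ℂ)) ∈ continuousFamily Z := by
  have hre : (fun z => C ((v z).re : ℂ)) ∈ continuousFamily Z :=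
    C_mem_polyFamily (by fun_prop : Continuous fun z => ((v z).re : ℂ))
  have him : (fun z => C ((v z).im : ℂ)) ∈ continuousFamily Z :=
    C_mem_polyFamily (by fun_prop : Continuous fun z => ((v z).im : ℂ))
  have hquot : (fun z => ofFn n fun i => (w z i : ℂ)) ∈ continuousFamily Z :=
    ofFn_mem_polyFamily fun i => (by fun_prop : Continuous fun z => (w z i : ℂ))
  simp only [correctionPoly, Polynomial.map_add, Polynomial.map_sub, Polynomial.map_mul,
    Polynomial.map_pow, Polynomial.map_one, map_C, map_X, map_ofFn_ofReal]
  exact (add_mem (sub_mem him (mul_mem hre (const_mem_polyFamily X)))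
    (mul_mem (const_mem_polyFamily (X ^ 2 + 1)) hquot) :)

lemma continuous_eval_correctionPoly {v : Z → ℂ} {t : Z → ℝ} (hv : Continuous v)
    (ht : Continuous t) (w : Fin n → ℝ) :
    Continuous fun z => (correctionPoly (v z) w).eval (t z) := by
  simp only [correctionPoly, eval_add, eval_sub, eval_mul, eval_pow, eval_C, eval_X, eval_one]
  fun_prop

variable {r : ℕ} {K : Set (Finset (Fin r))} {E : Fin r → ℕ} {j : Fin r}
  {f : ∀ k, Fin (E k) → ℂ}

/-- The tuple `f` with `f_j` replaced by `f_j - l i p`, where `p` is the real polynomial with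
`p(i) = -i f_j(i)` given by `w`. As `l` runs from `0` to `1`, the value at `i` shrinks to `0`,
while values at real points only change in the imaginary direction. -/
def correct (j : Fin r) (f : ∀ k, Fin (E k) → ℂ) (w : Fin n → ℝ) (l : ℝ) :
    ∀ k, Fin (E k) → ℂ :=
  Function.update f j (f j + toFn (E j) (C (-(l * Complex.I)) *
    (correctionPoly ((toPoly (f j)).eval Complex.I) w).map (algebraMap ℝ ℂ)))

lemma continuous_correct {f : Z → ∀ k, Fin (E k) → ℂ} {w : Z → Fin n → ℝ} {l : Z → ℝ}
    (hf : Continuous f) (hw : Continuous w) (hl : Continuous l) :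
    Continuous fun z => correct j (f z) (w z) (l z) := by
  have hfj : Continuous fun z => f z j := (continuous_apply j).comp hf
  have hscalar : (fun z => C (-(l z * Complex.I))) ∈ continuousFamily Z :=
    C_mem_polyFamily (by fun_prop : Continuous fun z => -(l z * Complex.I))
  exact hf.update j (hfj.add (continuous_toFn_of_mem (mul_mem hscalar
    (correctionPoly_mem_continuousFamily (continuous_eval_toPoly hfj continuous_const) hw)) _))

lemma correct_zero (w : Fin n → ℝ) : correct j f w 0 = f := by
  simp [correct]

lemma correct_of_ne (w : Fin n → ℝ) (l : ℝ) {k : Fin r} (hk : k ≠ j) :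
    correct j f w l k = f k :=
  Function.update_of_ne hk _ _

lemma toPoly_correct (hn : n + 2 ≤ E j) (w : Fin n → ℝ) (l : ℝ) :
    toPoly (correct j f w l j) = toPoly (f j) + C (-(l * Complex.I)) *
      (correctionPoly ((toPoly (f j)).eval Complex.I) w).map (algebraMap ℝ ℂ) := by
  rw [correct, Function.update_self, toPoly_add_toFn]
  rw [← smul_eq_C_mul]
  refine (degree_smul_le _ _).trans_lt (degree_map_le.trans_lt ?_)
  exact (degree_correctionPoly_lt _ w).trans_le (by exact_mod_cast hn)

lemma eval_I_correct (hn : n + 2 ≤ E j) (w : Fin n → ℝ) (l : ℝ) :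
    (toPoly (correct j f w l j)).eval Complex.I =
      (1 - l) * (toPoly (f j)).eval Complex.I := by
  rw [toPoly_correct hn, eval_add, eval_mul, eval_C, eval_map_algebraMap, aeval_I_correctionPoly]
  linear_combination (l * (toPoly (f j)).eval Complex.I) * Complex.I_mul_I

lemma eval_ofReal_correct (hn : n + 2 ≤ E j) (w : Fin n → ℝ) (l t : ℝ) :
    (toPoly (correct j f w l j)).eval (t : ℂ) = (toPoly (f j)).eval (t : ℂ) -
      (l * (correctionPoly ((toPoly (f j)).eval Complex.I) w).eval t : ℝ) * Complex.I := by
  have hreal := aeval_algebraMap_apply_eq_algebraMap_eval (A := ℂ) t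
    (correctionPoly ((toPoly (f j)).eval Complex.I) w)
  rw [Complex.coe_algebraMap] at hreal
  rw [toPoly_correct hn, eval_add, eval_mul, eval_C, eval_map_algebraMap, hreal]
  push_cast
  ring

/-- The parameters of the corrections that move `f_j` away from `0` at every bad time. -/
def safeCorrections (K : Set (Finset (Fin r))) (j : Fin r) (n : ℕ)
    (f : ∀ k, Fin (E k) → ℂ) : Set (Fin n → ℝ) :=
  {w | ∀ t, IsBadTime K j f t → (correctionPoly ((toPoly (f j)).eval Complex.I) w).eval t *
    ((toPoly (f j)).eval (t : ℂ)).im < 0}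

lemma correct_mem_PolSp (hn : n + 2 ≤ E j) (hf : f ∈ PolSp K E) {w : Fin n → ℝ}
    (hw : w ∈ safeCorrections K j n f) {l : ℝ} (hl : 0 ≤ l) : correct j f w l ∈ PolSp K E := by
  intro σ hσ t
  by_contra! hzero
  have hother : ∀ k ∈ σ, k ≠ j → (toPoly (f k)).eval (t : ℂ) = 0 := fun k hk hkj => by
    simpa only [correct_of_ne w l hkj] using hzero k hk
  by_cases hj : j ∈ σ
  · have hval := hzero j hj
    rw [eval_ofReal_correct hn, sub_eq_zero] at hval
    have hbad : IsBadTime K j f t :=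
      ⟨by simp [hval], σ.erase j, by simp, by rwa [Finset.insert_erase hj], fun k hk =>
        hother k (Finset.mem_of_mem_erase hk) (Finset.ne_of_mem_erase hk)⟩
    have hsafe := hw t hbad
    rw [hval, Complex.im_ofReal_mul, Complex.I_im, mul_one, mul_left_comm] at hsafe
    exact hsafe.not_ge (mul_nonneg hl (mul_self_nonneg _))
  · obtain ⟨k, hk, hne⟩ := hf σ hσ t
    exact hne (hother k hk fun h => hj (h ▸ hk))

lemma convex_safeCorrections : Convex ℝ (safeCorrections K j n f) := by
  intro w hw w' hw' a b ha hb hab t ht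
  set u := ((toPoly (f j)).eval (t : ℂ)).im
  rw [correctionPoly_convexCombination hab, eval_add, eval_smul, eval_smul, add_mul, smul_mul_assoc,
    smul_mul_assoc]
  exact (convex_Iio (0 : ℝ)) (hw t ht) (hw' t ht) ha hb hab

-- Interpolating `-f_j` at the bad times determines the quotient by `X² + 1` there.
lemma safeCorrections_nonempty (hf : f ∈ PolSp K E)
    (hbad : {t | IsBadTime K j f t}.encard ≤ n) : (safeCorrections K j n f).Nonempty := by
  have hfin := Set.finite_of_encard_le_coe hbad
  set B := hfin.toFinset
  have hB : B.card ≤ n := by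
    rw [hfin.encard_eq_coe_toFinset_card] at hbad
    exact_mod_cast hbad
  set v := (toPoly (f j)).eval Complex.I
  set val : ℝ → ℝ := fun t =>
    (-((toPoly (f j)).eval (t : ℂ)).im - (v.im - v.re * t)) / (t ^ 2 + 1)
  set p : ℝ[X] := Lagrange.interpolate B id val
  have hp : p.degree < n :=
    (Lagrange.degree_interpolate_lt _ Function.injective_id.injOn).trans_le (by exact_mod_cast hB)
  refine ⟨toFn n p, fun t ht => ?_⟩
  have hval : (correctionPoly v (toFn n p)).eval t = -((toPoly (f j)).eval (t : ℂ)).im := by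
    have hpt : p.eval t = val t :=
      Lagrange.eval_interpolate_at_node (v := id) val Function.injective_id.injOn
        (hfin.mem_toFinset.2 ht)
    have hpos : t ^ 2 + 1 ≠ 0 := by positivity
    simp [correctionPoly, ofFn_toFn_of_degree_lt hp, hpt, val, mul_div_cancel₀ _ hpos]
  rw [hval, neg_mul, neg_lt_zero]
  exact mul_self_pos.2 (ht.im_ne_zero hf)

lemma eventually_mem_safeCorrections (hK : ∀ σ, σ ∉ K → 1 < σ.card)
    {f : Z → ∀ k, Fin (E k) → ℂ} (hf : Continuous f) {z₀ : Z} {w : Fin n → ℝ}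
    (hw : w ∈ safeCorrections K j n (f z₀)) : ∀ᶠ z in 𝓝 z₀, w ∈ safeCorrections K j n (f z) := by
  have hfj : Continuous fun z => f z j := (continuous_apply j).comp hf
  set unsettledTimes : Set (Z × ℝ) := {p | IsBadTime K j (f p.1) p.2} ∩
    {p | 0 ≤ (correctionPoly ((toPoly (f p.1 j)).eval Complex.I) w).eval p.2 *
      ((toPoly (f p.1 j)).eval (p.2 : ℂ)).im}
  have hclosed : IsClosed unsettledTimes := by
    refine (isClosed_setOf_isBadTime (hf.comp continuous_fst) continuous_snd).inter
      (isClosed_le continuous_const ?_)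
    have hfst : Continuous fun p : Z × ℝ => f p.1 j := hfj.comp continuous_fst
    exact (continuous_eval_correctionPoly (continuous_eval_toPoly hfst continuous_const)
      continuous_snd w).mul (Complex.continuous_im.comp
        (continuous_eval_toPoly hfst (Complex.continuous_ofReal.comp continuous_snd)))
  have hnorm : ∀ᶠ z in 𝓝 z₀, ‖f z‖ < ‖f z₀‖ + 1 :=
    hf.norm.continuousAt.eventually_lt_const (lt_add_one _)
  have hcompact : ∀ᶠ z in 𝓝 z₀, ∀ t ∈ Set.Icc (-(‖f z₀‖ + 2)) (‖f z₀‖ + 2),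
      (z, t) ∉ unsettledTimes :=
    isCompact_Icc.eventually_forall_of_forall_eventually fun t _ =>
      hclosed.isOpen_compl.mem_nhds fun h => absurd (hw t h.1) (not_lt.2 h.2)
  filter_upwards [hnorm, hcompact] with z hz hsafe t ht
  have htR : |t| ≤ ‖f z₀‖ + 2 := by linarith [ht.abs_lt hK]
  exact not_le.1 fun h => hsafe t (abs_le.1 htR) ⟨ht, h⟩

/-- The tuples of `PolSp K E` whose `j`-th polynomial vanishes at `i`. -/
def vanishingAtI (K : Set (Finset (Fin r))) (E : Fin r → ℕ) (j : Fin r) : Set (PolSp K E) :=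
  {f | (toPoly (f.1 j)).eval Complex.I = 0}

-- The safe corrections are convex and locally constant, so a partition of unity chooses one for
-- each parameter, continuously.
lemma exists_homotopicWith_vanishingAtI [NormalSpace Z] [ParacompactSpace Z]
    (hK : ∀ σ, σ ∉ K → 1 < σ.card) (hn : n + 2 ≤ E j) (F : C(Z, PolSp K E))
    (hbad : ∀ z, {t | IsBadTime K j (F z).1 t}.encard ≤ n) {B : Set Z}
    (hB : ∀ z ∈ B, F z ∈ vanishingAtI K E j) :
    ∃ F' : C(Z, PolSp K E), (∀ z, F' z ∈ vanishingAtI K E j) ∧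
      F.HomotopicWith F' fun f => ∀ z ∈ B, f z ∈ vanishingAtI K E j := by
  have hF : Continuous fun z => (F z).1 := continuous_subtype_val.comp F.continuous
  obtain ⟨w, hw⟩ := exists_continuous_forall_mem_convex_of_local_const
    (t := fun z => safeCorrections K j n (F z).1) (fun _ => convex_safeCorrections) fun z =>
      (safeCorrections_nonempty (F z).2 (hbad z)).imp fun _ hw =>
        eventually_mem_safeCorrections hK hF hw
  let H : C(unitInterval × Z, PolSp K E) :=
    ⟨fun p => ⟨correct j (F p.2).1 (w p.2) p.1,
      correct_mem_PolSp hn (F p.2).2 (hw p.2) p.1.2.1⟩,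
      (continuous_correct (hF.comp continuous_snd) (w.continuous.comp continuous_snd)
        (continuous_subtype_val.comp continuous_fst)).subtype_mk _⟩
  have hH : ∀ l z, (toPoly ((H (l, z)).1 j)).eval Complex.I =
      (1 - l) * (toPoly ((F z).1 j)).eval Complex.I := fun l z => eval_I_correct hn _ _
  refine ⟨H.curry 1, fun z => by simp [vanishingAtI, hH], ⟨⟨⟨H, fun z => ?_, fun z => rfl⟩, ?_⟩⟩⟩
  · exact Subtype.ext (correct_zero _)
  · intro l z hz
    exact (hH l z).trans (by rw [hB z hz, mul_zero])

end Correction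

section GenericPerturbation

open Polynomial Topology

section Interpolation

variable {Z : Type*} {A : Subalgebra ℂ (Z → ℂ)} {q : ℕ} {t : Z → Fin q → ℂ}

lemma nodal_mem_polyFamily (ht : ∀ i, (fun z => t z i) ∈ A) :
    (fun z => Lagrange.nodal Finset.univ (t z)) ∈ polyFamily A := by
  have h : (fun z => Lagrange.nodal Finset.univ (t z)) = ∏ i, fun z => X - C (t z i) := by
    ext1 z
    simp [Lagrange.nodal]
  rw [h]
  exact prod_mem fun i _ => X_sub_C_mem_polyFamily (ht i)

lemma interpolate_mem_polyFamily {v : Z → Fin q → ℂ} (ht : ∀ i, (fun z => t z i) ∈ A)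
    (hinv : ∀ i i', i ≠ i' → (fun z => (t z i - t z i')⁻¹) ∈ A) (hv : ∀ i, (fun z => v z i) ∈ A) :
    (fun z => Lagrange.interpolate Finset.univ (t z) (v z)) ∈ polyFamily A := by
  have h : (fun z => Lagrange.interpolate Finset.univ (t z) (v z)) =
      ∑ i, (fun z => C (v z i)) * ∏ i' ∈ Finset.univ.erase i,
        (fun z => C (t z i - t z i')⁻¹) * fun z => X - C (t z i') := by
    ext1 z
    simp [Lagrange.interpolate_apply, Lagrange.basis, Lagrange.basisDivisor]
  rw [h]
  exact sum_mem fun i _ => mul_mem (C_mem_polyFamily (hv i)) <| prod_mem fun i' hi' =>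
    mul_mem (C_mem_polyFamily (hinv i i' (Finset.ne_of_mem_erase hi').symm))
      (X_sub_C_mem_polyFamily (ht i'))

lemma exists_eq_interpolate_add_nodal_mul {F : Type*} [Field F] [DecidableEq F] {q d : ℕ}
    {t : Fin q → F} (ht : Function.Injective t) {p : F[X]} (hp : p.degree < d) :
    ∃ h : Fin (d - q) → F, p = Lagrange.interpolate Finset.univ t (fun i => p.eval (t i)) +
      Lagrange.nodal Finset.univ t * ofFn (d - q) h := by
  set N := Lagrange.nodal Finset.univ t
  have hN : N.Monic := Lagrange.nodal_monic
  have hdegN : N.degree = q := by simp [N, Lagrange.degree_nodal]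
  have hquot : (p /ₘ N).degree < (d - q : ℕ) := by
    rcases eq_or_ne (p /ₘ N) 0 with h0 | h0
    · rw [h0, degree_zero]
      exact WithBot.bot_lt_coe _
    · have hadd := degree_add_divByMonic hN (not_lt.1 ((divByMonic_eq_zero_iff hN).not.1 h0))
      rw [← hadd, hdegN, degree_eq_natDegree h0] at hp
      rw [degree_eq_natDegree h0]
      have hlt : q + (p /ₘ N).natDegree < d := by exact_mod_cast hp
      exact_mod_cast (by omega : (p /ₘ N).natDegree < d - q)
  have hrem : p %ₘ N = Lagrange.interpolate Finset.univ t fun i => p.eval (t i) := by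
    refine Lagrange.eq_interpolate_of_eval_eq _ ht.injOn ?_ fun i hi => ?_
    · simpa [hdegN] using degree_modByMonic_lt p hN
    · conv_rhs => rw [← modByMonic_add_div p N]
      rw [eval_add, eval_mul, Lagrange.eval_nodal_at_node hi, zero_mul, add_zero]
  refine ⟨toFn (d - q) (p /ₘ N), ?_⟩
  rw [ofFn_toFn_of_degree_lt hquot, ← hrem, modByMonic_add_div p N]

end Interpolation

section DimensionCount

variable {P : Type*} [NormedAddCommGroup P] [NormedSpace ℝ P]

/-- The complex functions that are continuously differentiable on `S`. -/
def contDiffOnSubalgebra (S : Set P) : Subalgebra ℂ (P → ℂ) where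
  carrier := {f | ContDiffOn ℝ 1 f S}
  add_mem' := ContDiffOn.add
  mul_mem' := ContDiffOn.mul
  algebraMap_mem' _ := contDiffOn_const

-- A continuously differentiable map does not raise the Hausdorff dimension.
lemma dense_compl_iUnion_image_of_finrank_lt {ι : Type*} [Countable ι] {P : ι → Type*}
    [∀ i, NormedAddCommGroup (P i)] [∀ i, NormedSpace ℝ (P i)] [∀ i, FiniteDimensional ℝ (P i)]
    {V : Type*} [NormedAddCommGroup V] [NormedSpace ℝ V] [FiniteDimensional ℝ V]
    {g : ∀ i, P i → V} {S : ∀ i, Set (P i)} (hS : ∀ i, Convex ℝ (S i))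
    (hg : ∀ i, ContDiffOn ℝ 1 (g i) (S i))
    (hdim : ∀ i, Module.finrank ℝ (P i) < Module.finrank ℝ V) :
    Dense (⋃ i, g i '' S i)ᶜ := by
  rcases isEmpty_or_nonempty ι with hι | ⟨⟨i₀⟩⟩
  · simp
  refine dense_compl_of_dimH_lt_finrank ?_
  have hle : dimH (⋃ i, g i '' S i) ≤ (Module.finrank ℝ V - 1 : ℕ) := by
    rw [dimH_iUnion]
    refine iSup_le fun i => ((hg i).dimH_image_le (hS i) subset_rfl).trans ?_
    refine (dimH_mono (Set.subset_univ _)).trans ?_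
    rw [Real.dimH_univ_eq_finrank]
    exact_mod_cast Nat.le_sub_one_of_lt (hdim i)
  exact hle.trans_lt (by exact_mod_cast Nat.sub_one_lt_of_lt (hdim i₀))

lemma convex_setOf_strictMono {q : ℕ} : Convex ℝ {t : Fin q → ℝ | StrictMono t} := by
  intro t ht t' ht' a b ha hb hab i i' hi
  have h := convex_Ioi (0 : ℝ) (sub_pos.2 (ht hi)) (sub_pos.2 (ht' hi)) ha hb hab
  simp only [smul_eq_mul, Set.mem_Ioi, Pi.add_apply, Pi.smul_apply] at h ⊢
  linarith

lemma exists_strictMono_of_le_encard {α : Type*} [LinearOrder α] {s : Set α} {q : ℕ}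
    (h : q ≤ s.encard) : ∃ t : Fin q → α, StrictMono t ∧ ∀ i, t i ∈ s := by
  obtain ⟨u, hu, hcard⟩ := Set.exists_subset_encard_eq h
  have hfin : u.Finite := Set.finite_of_encard_eq_coe hcard
  have hcard' : hfin.toFinset.card = q := by
    rw [hfin.encard_eq_coe_toFinset_card] at hcard
    exact_mod_cast hcard
  exact ⟨hfin.toFinset.orderEmbOfFin hcard', OrderEmbedding.strictMono _, fun i =>
    hu (hfin.mem_toFinset.1 (Finset.orderEmbOfFin_mem _ _ _))⟩

variable {r q : ℕ} {K : Set (Finset (Fin r))} {D E : Fin r → ℕ} {j : Fin r}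

/-- The change of the coefficients of a tuple of degrees `E` when `(z - i) ^ (E k - D k) p_k` is
added to its `k`-th polynomial, `p_k` being the polynomial of degree less than `D k` with
coefficients `c k`. -/
def perturbation (E : Fin r → ℕ) (c : ∀ k, Fin (D k) → ℂ) : ∀ k, Fin (E k) → ℂ :=
  fun k => toFn (E k) ((X - C Complex.I) ^ (E k - D k) * ofFn (D k) (c k))

lemma perturbation_zero : perturbation E (0 : ∀ k, Fin (D k) → ℂ) = 0 := by
  ext1 k
  simp [perturbation]

lemma continuous_perturbation : Continuous (perturbation (D := D) E) := by
  refine continuous_pi fun k => ?_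
  have hofFn : (fun c : ∀ k, Fin (D k) → ℂ => ofFn (D k) (c k)) ∈
      continuousFamily (∀ k, Fin (D k) → ℂ) :=
    ofFn_mem_polyFamily fun i => (continuous_apply i).comp (continuous_apply k)
  have hmul : (fun c : ∀ k, Fin (D k) → ℂ =>
      (X - C Complex.I) ^ (E k - D k) * ofFn (D k) (c k)) ∈ continuousFamily _ :=
    (mul_mem (const_mem_polyFamily _) hofFn :)
  exact continuous_toFn_of_mem hmul (E k)

lemma toPoly_add_perturbation (hle : D ≤ E) (f : ∀ k, Fin (E k) → ℂ) (c : ∀ k, Fin (D k) → ℂ)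
    (k : Fin r) : toPoly ((f + perturbation E c) k) =
      toPoly (f k) + (X - C Complex.I) ^ (E k - D k) * ofFn (D k) (c k) := by
  refine toPoly_add_toFn (f k) ?_
  rw [degree_mul, degree_pow, degree_X_sub_C, nsmul_one]
  calc ((E k - D k : ℕ) : WithBot ℕ) + (ofFn (D k) (c k)).degree < (E k - D k : ℕ) + D k :=
        WithBot.add_lt_add_left (by simp) (ofFn_degree_lt (c k))
    _ = E k := by exact_mod_cast Nat.sub_add_cancel (hle k)

/-- The perturbation parameters for which the perturbed tuple takes the values `u i` at the times
`t i`; the remaining freedom is a tuple of quotients by `∏ i, (z - t i)`, with coefficients `h`. -/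
def perturbationWithValues (f : ∀ k, Fin (E k) → ℂ) (t : Fin q → ℝ) (u : Fin q → Fin r → ℂ)
    (h : ∀ k, Fin (D k - q) → ℂ) : ∀ k, Fin (D k) → ℂ := fun k =>
  toFn (D k) (Lagrange.interpolate Finset.univ (fun i => (t i : ℂ)) (fun i =>
      (u i k - (toPoly (f k)).eval (t i : ℂ)) * ((t i - Complex.I) ^ (E k - D k))⁻¹) +
    Lagrange.nodal Finset.univ (fun i => (t i : ℂ)) * ofFn (D k - q) (h k))

lemma ofReal_sub_I_ne_zero (t : ℝ) : (t : ℂ) - Complex.I ≠ 0 := fun h => by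
  simpa using congrArg Complex.im h

lemma exists_perturbationWithValues_eq (hle : D ≤ E) (f : ∀ k, Fin (E k) → ℂ)
    (c : ∀ k, Fin (D k) → ℂ) {t : Fin q → ℝ} (ht : Function.Injective t) :
    ∃ h, perturbationWithValues f t
      (fun i k => (toPoly ((f + perturbation E c) k)).eval (t i : ℂ)) h = c := by
  have hinj : Function.Injective fun i => (t i : ℂ) := Complex.ofReal_injective.comp ht
  choose h hh using fun k => exists_eq_interpolate_add_nodal_mul hinj (ofFn_degree_lt (c k))
  refine ⟨h, funext fun k => ?_⟩
  have hval : ∀ i, ((toPoly ((f + perturbation E c) k)).eval (t i : ℂ) -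
      (toPoly (f k)).eval (t i : ℂ)) * ((t i - Complex.I) ^ (E k - D k))⁻¹ =
      (ofFn (D k) (c k)).eval (t i : ℂ) := fun i => by
    have hne := pow_ne_zero (E k - D k) (ofReal_sub_I_ne_zero (t i))
    simp only [toPoly_add_perturbation hle, eval_add, eval_mul, eval_pow, eval_sub, eval_X, eval_C,
      add_sub_cancel_left]
    field_simp
  simp only [perturbationWithValues, hval, ← hh k, toFn_comp_ofFn_eq_id]

lemma contDiffOn_perturbationWithValues {S : Set P} {f : P → ∀ k, Fin (E k) → ℂ}
    {t : P → Fin q → ℝ} {u : P → Fin q → Fin r → ℂ} {h : P → ∀ k, Fin (D k - q) → ℂ}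
    (hf : ContDiffOn ℝ 1 f S) (ht : ContDiffOn ℝ 1 t S) (hu : ContDiffOn ℝ 1 u S)
    (hh : ContDiffOn ℝ 1 h S) (hinj : ∀ p ∈ S, Function.Injective (t p)) :
    ContDiffOn ℝ 1 (fun p => perturbationWithValues (f p) (t p) (u p) (h p)) S := by
  have htC : ∀ i, (fun p => (t p i : ℂ)) ∈ contDiffOnSubalgebra S := fun i =>
    Complex.ofRealCLM.contDiff.comp_contDiffOn (contDiffOn_pi.1 ht i)
  have hinv : ∀ i i', i ≠ i' → (fun p => ((t p i : ℂ) - t p i')⁻¹) ∈ contDiffOnSubalgebra S :=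
    fun i i' hne => ContDiffOn.inv ((htC i).sub (htC i')) fun p hp h =>
      hne (hinj p hp (Complex.ofReal_injective (sub_eq_zero.1 h)))
  have hfactor : ∀ (e : ℕ) i,
      (fun p => ((t p i - Complex.I) ^ e)⁻¹) ∈ contDiffOnSubalgebra S := fun e i =>
    ContDiffOn.inv (((htC i).sub contDiffOn_const).pow e) fun p _ =>
      pow_ne_zero e (ofReal_sub_I_ne_zero (t p i))
  have heval : ∀ k i,
      (fun p => (toPoly (f p k)).eval (t p i : ℂ)) ∈ contDiffOnSubalgebra S := fun k i =>
    eval_mem_of_mem_polyFamily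
      (toPoly_mem_polyFamily fun l => contDiffOn_pi.1 (contDiffOn_pi.1 hf k) l) (htC i)
      fun p => (isMonicOfDegree_toPoly (f p k)).natDegree_eq.le
  have huC : ∀ i k, (fun p => u p i k) ∈ contDiffOnSubalgebra S := fun i k =>
    contDiffOn_pi.1 (contDiffOn_pi.1 hu i) k
  refine contDiffOn_pi.2 fun k => contDiffOn_pi.2 fun n => ?_
  exact (add_mem
    (interpolate_mem_polyFamily htC hinv fun i =>
      mul_mem (sub_mem (huC i k) (heval k i)) (hfactor (E k - D k) i))
    (mul_mem (nodal_mem_polyFamily htC)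
      (ofFn_mem_polyFamily fun l => contDiffOn_pi.1 (contDiffOn_pi.1 hh k) l)) :
    _ ∈ polyFamily (contDiffOnSubalgebra S)) n

/-- The values that a tuple can take at a bad time, for the set `τ` of the other vanishing
members. -/
def badValues (j : Fin r) (τ : Finset (Fin r)) : Submodule ℝ (Fin r → ℂ) where
  carrier := {u | (u j).re = 0 ∧ ∀ k ∈ τ, u k = 0}
  add_mem' hu hv := ⟨by simp [hu.1, hv.1], fun k hk => by simp [hu.2 k hk, hv.2 k hk]⟩
  zero_mem' := ⟨rfl, fun _ _ => rfl⟩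
  smul_mem' c u hu := ⟨by simp [hu.1], fun k hk => by simp [hu.2 k hk]⟩

lemma finrank_pi_complex (κ : Type*) [Fintype κ] :
    Module.finrank ℝ (κ → ℂ) = 2 * Fintype.card κ := by
  simp [Module.finrank_pi_fintype, mul_comm]

lemma finrank_pi_fin_complex (d : Fin r → ℕ) :
    Module.finrank ℝ (∀ k, Fin (d k) → ℂ) = 2 * ∑ k, d k := by
  simp [Module.finrank_pi_fintype, ← Finset.sum_mul, mul_comm]

lemma finrank_badValues_add_le {τ : Finset (Fin r)} (hj : j ∉ τ) :
    Module.finrank ℝ (badValues j τ) + 2 * (insert j τ).card ≤ 2 * r + 1 := by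
  let coords : badValues j τ →ₗ[ℝ] ℝ × ({k // k ∉ insert j τ} → ℂ) :=
    (Complex.imLm ∘ₗ LinearMap.proj j ∘ₗ (badValues j τ).subtype).prod
      (LinearMap.pi fun k => LinearMap.proj k.1 ∘ₗ (badValues j τ).subtype)
  have hinj : Function.Injective coords := by
    refine (injective_iff_map_eq_zero coords).2 fun u hu => Subtype.ext (funext fun k => ?_)
    by_cases hk : k ∈ insert j τ
    · rcases Finset.mem_insert.1 hk with rfl | hk
      · exact Complex.ext u.2.1 (congrArg Prod.fst hu)
      · exact u.2.2 k hk
    · exact congrFun (congrArg Prod.snd hu) ⟨k, hk⟩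
  have hle := LinearMap.finrank_le_finrank_of_injective hinj
  have hcard : Fintype.card {k // k ∉ insert j τ} + (insert j τ).card = r := by
    rw [Fintype.card_subtype_compl, Fintype.card_coe, Fintype.card_fin]
    exact Nat.sub_add_cancel (card_finset_fin_le _)
  rw [Module.finrank_prod, Module.finrank_self, finrank_pi_complex] at hle
  omega

lemma finrank_pi_badValues_lt {ρ m : ℕ} {τ : Fin q → Finset (Fin r)} (hj : ∀ i, j ∉ τ i)
    (hτ : ∀ i, ρ ≤ (insert j (τ i)).card) (hqD : ∀ k, q ≤ D k) (hm : m < 2 * (ρ - 1) * q) :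
    m + q + Module.finrank ℝ (∀ i, badValues j (τ i)) +
        Module.finrank ℝ (∀ k, Fin (D k - q) → ℂ) <
      Module.finrank ℝ (∀ k, Fin (D k) → ℂ) := by
  obtain ⟨ρ, rfl⟩ : ∃ ρ', ρ = ρ' + 1 := Nat.exists_eq_succ_of_ne_zero fun h => by simp [h] at hm
  have hbad : ∑ i, Module.finrank ℝ (badValues j (τ i)) + 2 * (ρ + 1) * q ≤ (2 * r + 1) * q := by
    have h := Finset.sum_le_sum fun i (_ : i ∈ Finset.univ) =>
      (Nat.add_le_add_left (Nat.mul_le_mul_left 2 (hτ i)) _).trans (finrank_badValues_add_le (hj i))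
    simpa [Finset.sum_add_distrib, mul_comm] using h
  have hquot : ∑ k, (D k - q) + r * q = ∑ k, D k := by
    simpa [Finset.sum_add_distrib] using
      Finset.sum_congr rfl fun k (_ : k ∈ Finset.univ) => Nat.sub_add_cancel (hqD k)
  rw [finrank_pi_fin_complex, finrank_pi_fin_complex, ← hquot, Module.finrank_pi_fintype]
  simp only [Nat.add_sub_cancel] at hm
  nlinarith

set_option synthInstance.maxHeartbeats 100000 in
-- The search for freeness of the fourfold product of parameter spaces is long.
lemma dense_setOf_encard_isBadTime_lt {V : Type*} [NormedAddCommGroup V] [NormedSpace ℝ V]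
    [FiniteDimensional ℝ V] {ρ : ℕ} (hK : ∀ σ, σ ∉ K → ρ ≤ σ.card) (hle : D ≤ E)
    (hqD : ∀ k, q ≤ D k) (hdim : Module.finrank ℝ V < 2 * (ρ - 1) * q)
    {f : V → ∀ k, Fin (E k) → ℂ} (hf : ContDiff ℝ 1 f) :
    Dense {c : ∀ k, Fin (D k) → ℂ |
      ∀ y, {t | IsBadTime K j (f y + perturbation E c) t}.encard < q} := by
  let ι := Fin q → {τ : Finset (Fin r) // j ∉ τ ∧ insert j τ ∉ K}
  let P : ι → Type _ := fun τ =>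
    V × (Fin q → ℝ) × (∀ i, badValues j (τ i).1) × (∀ k, Fin (D k - q) → ℂ)
  let g : ∀ τ : ι, P τ → ∀ k, Fin (D k) → ℂ := fun τ p =>
    perturbationWithValues (f p.1) p.2.1 (fun i => p.2.2.1 i) p.2.2.2
  let S : ∀ τ : ι, Set (P τ) := fun τ => {p | StrictMono p.2.1}
  have hS : ∀ τ, Convex ℝ (S τ) := fun τ =>
    convex_setOf_strictMono.linear_preimage (LinearMap.fst ℝ _ _ ∘ₗ LinearMap.snd ℝ _ _)
  have hu : ∀ τ, ContDiff ℝ 1 fun (p : P τ) i => (p.2.2.1 i : Fin r → ℂ) := fun τ =>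
    contDiff_pi.2 fun i => (badValues j (τ i).1).subtypeL.contDiff.comp
      (contDiff_pi.1 contDiff_id i).fst'.snd'.snd'
  have hg : ∀ τ, ContDiffOn ℝ 1 (g τ) (S τ) := fun τ =>
    contDiffOn_perturbationWithValues (hf.comp contDiff_fst).contDiffOn
      (by fun_prop) (hu τ).contDiffOn (by fun_prop) fun p hp => hp.injective
  have hfinrank : ∀ τ, Module.finrank ℝ (P τ) < Module.finrank ℝ (∀ k, Fin (D k) → ℂ) :=
    fun τ => by
      have h := finrank_pi_badValues_lt (fun i => (τ i).2.1) (fun i => hK _ (τ i).2.2) hqD hdim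
      rw [Module.finrank_prod, Module.finrank_prod, Module.finrank_prod, Module.finrank_fin_fun]
      simpa only [add_assoc] using h
  have hdense : Dense (⋃ τ, g τ '' S τ)ᶜ :=
    dense_compl_iUnion_image_of_finrank_lt hS hg hfinrank
  refine hdense.mono ?_
  intro c hc y
  refine not_le.1 fun hbad => hc ?_
  obtain ⟨t, ht, hbad⟩ := exists_strictMono_of_le_encard hbad
  choose hre τ hj hτ hzero using hbad
  obtain ⟨h, hh⟩ := exists_perturbationWithValues_eq hle (f y) c ht.injective
  exact Set.mem_iUnion.2 ⟨fun i => ⟨τ i, hj i, hτ i⟩,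
    (y, t, fun i => ⟨_, hre i, hzero i⟩, h), ht, hh⟩

end DimensionCount

end GenericPerturbation

section Approximation

open Topology
open scoped Manifold ContDiff

lemma exists_forall_ball_subset {Z M : Type*} [TopologicalSpace Z] [CompactSpace Z]
    [PseudoMetricSpace M] {U : Set M} (hU : IsOpen U) (F : C(Z, U)) :
    ∃ δ > 0, ∀ z, Metric.ball (F z : M) δ ⊆ U := by
  have hF : Continuous fun z => (F z : M) := continuous_subtype_val.comp F.continuous
  obtain ⟨δ, hδ, h⟩ := (isCompact_range hF).exists_thickening_subset_open hU
    (Set.range_subset_iff.2 fun z => (F z).2)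
  exact ⟨δ, hδ, fun z => (Metric.ball_subset_thickening (Set.mem_range_self z) δ).trans h⟩

variable {V : Type*} [NormedAddCommGroup V] [NormedSpace ℝ V]

lemma exists_contDiff_dist_lt_and_mem {P : Type*} [NormedAddCommGroup P] [NormedSpace ℝ P]
    [FiniteDimensional ℝ P] {f : P → V} (hf : Continuous f) {B : Set P} (hB : IsClosed B)
    {S : Set V} (hS : Convex ℝ S) (hfB : ∀ y ∈ B, f y ∈ S) {ε : ℝ} (hε : 0 < ε) (n : ℕ∞) :
    ∃ g : P → V, ContDiff ℝ n g ∧ ∀ y, dist (g y) (f y) < ε ∧ (y ∈ B → g y ∈ S) := by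
  have hconvex : ∀ y, Convex ℝ {v | dist v (f y) < ε ∧ (y ∈ B → v ∈ S)} := fun y =>
    (convex_ball (f y) ε).inter fun v hv w hw a b ha hb hab hy => hS (hv hy) (hw hy) ha hb hab
  have hlocal : ∀ y, ∃ v, ∀ᶠ y' in 𝓝 y, v ∈ {v | dist v (f y') < ε ∧ (y' ∈ B → v ∈ S)} := by
    intro y
    refine ⟨f y, Filter.Eventually.and ?_ ?_⟩
    · exact (continuous_const.dist hf).continuousAt.eventually_lt_const (by simpa using hε)
    · by_cases hy : y ∈ B
      · exact .of_forall fun _ _ => hfB y hy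
      · filter_upwards [hB.isOpen_compl.mem_nhds hy] with y' hy' h using absurd h hy'
  obtain ⟨g, hg⟩ := exists_contMDiffMap_forall_mem_convex_of_local_const (n := n) 𝓘(ℝ, P)
    hconvex hlocal
  exact ⟨g, g.contMDiff.contDiff, hg⟩

lemma exists_contDiff_cube_dist_lt_and_mem {m : ℕ} (F : C(Fin m → unitInterval, V))
    {B : Set (Fin m → unitInterval)} (hB : IsClosed B) {S : Set V} (hS : Convex ℝ S)
    (hFB : ∀ y ∈ B, F y ∈ S) {ε : ℝ} (hε : 0 < ε) (n : ℕ∞) :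
    ∃ g : (Fin m → ℝ) → V, ContDiff ℝ n g ∧ ∀ y : Fin m → unitInterval,
      dist (g fun i => y i) (F y) < ε ∧ (y ∈ B → (g fun i => y i) ∈ S) := by
  let clamp : (Fin m → ℝ) → Fin m → unitInterval := fun y i => Set.projIcc 0 1 zero_le_one (y i)
  have hclamp : Continuous clamp :=
    continuous_pi fun i => continuous_projIcc.comp (continuous_apply i)
  have hclamp_coe : ∀ y : Fin m → unitInterval, clamp (fun i => y i) = y := fun y =>
    funext fun i => Set.projIcc_val _ _
  obtain ⟨g, hg, hgF⟩ := exists_contDiff_dist_lt_and_mem (F.continuous.comp hclamp)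
    (hB.preimage hclamp) hS (fun y hy => hFB _ hy) hε n
  exact ⟨g, hg, fun y => by simpa [hclamp_coe] using hgF fun i => y i⟩

lemma homotopicWith_of_segment_subset {Z : Type*} [TopologicalSpace Z] {U : Set V}
    {F G : C(Z, U)} (h : ∀ z, segment ℝ (F z : V) (G z) ⊆ U) {B : Set Z} {S : Set V}
    (hS : Convex ℝ S) (hF : ∀ z ∈ B, (F z : V) ∈ S) (hG : ∀ z ∈ B, (G z : V) ∈ S) :
    F.HomotopicWith G fun f => ∀ z ∈ B, (f z : V) ∈ S := by
  have hmem : ∀ (l : unitInterval) z,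
      AffineMap.lineMap (F z : V) (G z) (l : ℝ) ∈ segment ℝ (F z : V) (G z) := fun l z =>
    segment_eq_image_lineMap ℝ (F z : V) (G z) ▸ Set.mem_image_of_mem _ l.2
  have hcont : Continuous fun p : unitInterval × Z =>
      AffineMap.lineMap (F p.2 : V) (G p.2) (p.1 : ℝ) := by
    simp only [AffineMap.lineMap_apply_module]
    fun_prop
  refine ⟨⟨⟨⟨fun p => ⟨_, h p.2 (hmem p.1 p.2)⟩, hcont.subtype_mk _⟩, ?_, ?_⟩, ?_⟩⟩
  · exact fun z => Subtype.ext (by simp)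
  · exact fun z => Subtype.ext (by simp)
  · exact fun l z hz => hS.segment_subset (hF z hz) (hG z hz) (hmem l z)

end Approximation

section AddingOneRoot

open Polynomial Topology

variable {r q ρ m : ℕ} {K : Set (Finset (Fin r))} {D E : Fin r → ℕ} {j : Fin r}

lemma toPoly_smul_add_smul {d : ℕ} (a b : Fin d → ℂ) {s t : ℝ} (hst : s + t = 1) :
    toPoly (s • a + t • b) = C (s : ℂ) * toPoly a + C (t : ℂ) * toPoly b := by
  have hX : (X : ℂ[X]) ^ d = C (s : ℂ) * X ^ d + C (t : ℂ) * X ^ d := by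
    rw [← add_mul, ← C_add, ← Complex.ofReal_add, hst, Complex.ofReal_one, C_1, one_mul]
  simp only [toPoly_eq_X_pow_add, ← Complex.coe_smul, map_add, map_smul, smul_eq_C_mul, mul_add]
  nth_rewrite 1 [hX]
  ring

lemma convex_setOf_eval_toPoly_eq_zero (j : Fin r) (z : ℂ) :
    Convex ℝ {f : ∀ k, Fin (E k) → ℂ | (toPoly (f j)).eval z = 0} := by
  intro f hf g hg s t _ _ hst
  have hf : (toPoly (f j)).eval z = 0 := hf
  have hg : (toPoly (g j)).eval z = 0 := hg
  simp [toPoly_smul_add_smul _ _ hst, hf, hg]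

lemma eval_I_toPoly_add_perturbation (hle : D ≤ E) (hj : D j < E j) (f : ∀ k, Fin (E k) → ℂ)
    (c : ∀ k, Fin (D k) → ℂ) :
    (toPoly ((f + perturbation E c) j)).eval Complex.I = (toPoly (f j)).eval Complex.I := by
  rw [toPoly_add_perturbation hle, eval_add, eval_mul]
  simp [Nat.sub_ne_zero_of_lt hj]

lemma exists_homotopicWith_encard_isBadTime_lt (hK : ∀ σ, σ ∉ K → ρ ≤ σ.card) (hle : D ≤ E)
    (hj : D j < E j) (hqD : ∀ k, q ≤ D k) (hm : m < 2 * (ρ - 1) * q)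
    (F : C(Fin m → unitInterval, PolSp K E)) {B : Set (Fin m → unitInterval)} (hB : IsClosed B)
    (hF : ∀ y ∈ B, F y ∈ vanishingAtI K E j) :
    ∃ F' : C(Fin m → unitInterval, PolSp K E),
      (∀ y, {t | IsBadTime K j (F' y).1 t}.encard < q) ∧
      F.HomotopicWith F' fun f => ∀ y ∈ B, f y ∈ vanishingAtI K E j := by
  have hρ : 0 < ρ := Nat.pos_of_ne_zero fun h => by simp [h] at hm
  obtain ⟨δ, hδ, hball⟩ := exists_forall_ball_subset
    (isOpen_PolSp fun σ hσ => Finset.card_pos.1 (hρ.trans_le (hK σ hσ))) F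
  obtain ⟨g, hg, hgF⟩ := exists_contDiff_cube_dist_lt_and_mem
    ⟨fun y => (F y).1, continuous_subtype_val.comp F.continuous⟩ hB
    (convex_setOf_eval_toPoly_eq_zero j Complex.I) hF (half_pos hδ) 1
  obtain ⟨c, hc, hfew⟩ := (dense_setOf_encard_isBadTime_lt (j := j) hK hle hqD
    (by simpa using hm) hg).inter_open_nonempty {c | dist (perturbation E c) 0 < δ / 2}
    (isOpen_lt (continuous_perturbation.dist continuous_const) continuous_const)
    ⟨0, by simpa [perturbation_zero] using hδ⟩
  let G : (Fin m → unitInterval) → ∀ k, Fin (E k) → ℂ := fun y =>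
    g (fun i => y i) + perturbation E c
  have hG : Continuous G := (hg.continuous.comp (by fun_prop)).add continuous_const
  have hGF : ∀ y, G y ∈ Metric.ball (F y).1 δ := fun y =>
    calc dist (G y) (F y).1 ≤ dist (g fun i => y i) (F y).1 + dist (perturbation E c) 0 := by
          simpa using dist_add_add_le (g fun i => y i) (perturbation E c) (F y).1 0
      _ < δ / 2 + δ / 2 := add_lt_add (hgF y).1 hc
      _ = δ := add_halves δ
  have hGB : ∀ y ∈ B, (toPoly (G y j)).eval Complex.I = 0 := fun y hy =>
    (eval_I_toPoly_add_perturbation hle hj _ c).trans <| (hgF y).2 hy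
  refine ⟨⟨fun y => ⟨G y, hball y (hGF y)⟩, hG.subtype_mk _⟩, fun y => hfew _,
    homotopicWith_of_segment_subset (fun y => ?_)
      (convex_setOf_eval_toPoly_eq_zero j Complex.I) hF hGB⟩
  exact ((convex_ball _ _).segment_subset (Metric.mem_ball_self hδ) (hGF y)).trans (hball y)

lemma isEmbedding_mulPow {d e : ℕ} (h : d ≤ e) (x : ℂ) :
    IsEmbedding (mulPow (d := d) e x) := by
  let L : (Fin d → ℂ) →ₗ[ℂ] Fin e → ℂ :=
    toFn e ∘ₗ LinearMap.mulRight ℂ ((X - C x) ^ (e - d)) ∘ₗ ofFn d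
  have hL : ∀ a, mulPow e x a = mulPow e x (0 : Fin d → ℂ) + L a := fun a => by
    simp only [mulPow, L, toPoly_eq_X_pow_add, add_mul, map_add, map_zero, add_zero]
    rfl
  have hinj : Function.Injective L := fun a b hab => toPoly_injective <|
    mul_right_cancel₀ (pow_ne_zero (e - d) (X_sub_C_ne_zero x)) <| by
      rw [← toPoly_mulPow h, ← toPoly_mulPow h, hL a, hL b, hab]
  rw [funext hL]
  exact (Homeomorph.addLeft (mulPow e x (0 : Fin d → ℂ))).isEmbedding.comp
    (LinearMap.isClosedEmbedding_of_injective (LinearMap.ker_eq_bot.2 hinj)).isEmbedding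

lemma isEmbedding_mulI (hle : D ≤ E) : IsEmbedding (mulI K hle) :=
  .of_comp (mulI K hle).continuous continuous_subtype_val <|
    (IsEmbedding.piMap fun k => isEmbedding_mulPow (hle k) Complex.I).comp .subtypeVal

lemma range_mulI (hle : D ≤ E) : Set.range (mulI K hle) =
    {f : PolSp K E | ∀ k, (X - C Complex.I) ^ (E k - D k) ∣ toPoly (f.1 k)} := by
  refine Set.Subset.antisymm ?_ fun f hf => ?_
  · rintro _ ⟨f, rfl⟩ k
    exact toPoly_mulI hle f k ▸ dvd_mul_left _ _
  choose p hp using hf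
  have hmonic : ∀ k, IsMonicOfDegree (p k) (D k) := fun k => by
    refine ((isMonicOfDegree_X_sub_one Complex.I).pow (E k - D k)).of_mul_left ?_
    rw [one_mul, Nat.sub_add_cancel (hle k), ← hp k]
    exact isMonicOfDegree_toPoly _
  have hmem : (fun k => toFn (D k) (p k)) ∈ PolSp K D := fun σ hσ t => by
    refine (f.2 σ hσ t).imp fun k hk => ⟨hk.1, fun h => hk.2 ?_⟩
    rw [toPoly_toFn (hmonic k)] at h
    rw [hp k, eval_mul, h, mul_zero]
  refine ⟨⟨_, hmem⟩, Subtype.ext (funext fun k => toPoly_injective ?_)⟩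
  rw [toPoly_mulI, toPoly_toFn (hmonic k), hp k, mul_comm]

lemma range_mulI_eq_vanishingAtI (hle : D ≤ E) (hj : D j + 1 = E j) (hk : ∀ k ≠ j, D k = E k) :
    Set.range (mulI K hle) = vanishingAtI K E j := by
  rw [range_mulI]
  ext f
  refine ⟨fun h => dvd_iff_isRoot.1 ?_, fun h k => ?_⟩
  · simpa [← hj] using h j
  · rcases eq_or_ne k j with rfl | hne
    · simpa [← hj] using dvd_iff_isRoot.2 h
    · simp [hk k hne]

lemma one_lt_of_lt_mul (hm : m < 2 * (ρ - 1) * q) : 1 < ρ := by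
  by_contra! h
  simp [Nat.sub_eq_zero_of_le h] at hm

lemma hasCubeLifting_mulI_covBy (hK : ∀ σ, σ ∉ K → ρ ≤ σ.card) (h : D ⋖ E)
    (hqD : ∀ k, q ≤ D k) (hm : m < 2 * (ρ - 1) * q) : HasCubeLifting (Fin m) (mulI K h.le) := by
  obtain ⟨j, hj, hk⟩ := Pi.covBy_iff.1 h
  rw [Nat.covBy_iff_add_one_eq] at hj
  have hq : 0 < q := Nat.pos_of_mul_pos_left (Nat.zero_lt_of_lt hm)
  have hρ : 1 < ρ := one_lt_of_lt_mul hm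
  have hrange := range_mulI_eq_vanishingAtI (K := K) h.le hj hk
  refine .of_isEmbedding (isEmbedding_mulI h.le) ?_
  rw [hrange]
  intro F hF
  obtain ⟨F₁, hfew, hF₁⟩ := exists_homotopicWith_encard_isBadTime_lt hK h.le (hj ▸ lt_add_one _)
    hqD hm F isClosed_cubeBoundary hF
  have hfew' : ∀ y, {t | IsBadTime K j (F₁ y).1 t}.encard ≤ (q - 1 : ℕ) := fun y =>
    Order.le_of_lt_add_one (by exact_mod_cast (Nat.sub_add_cancel hq).symm ▸ hfew y)
  have hdeg : q - 1 + 2 ≤ E j := by have := hqD j; omega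
  obtain ⟨F₂, hF₂, hF₁₂⟩ := exists_homotopicWith_vanishingAtI
    (fun σ hσ => hρ.trans_le (hK σ hσ)) hdeg F₁ hfew' (B := Cube.boundary (Fin m))
    (by simpa using hF₁.some.prop 1)
  exact ⟨F₂, hF₂, hF₁.trans hF₁₂⟩

end AddingOneRoot

section Stabilization

variable {r : ℕ} {K : Set (Finset (Fin r))} {D D' : Fin r → ℕ}

lemma rmin_le_card {σ : Finset (Fin r)} (hσ : σ ∉ K) : rmin K ≤ σ.card := by
  obtain ⟨τ, hτσ, hτ⟩ := exists_minimal_le_of_wellFoundedLT (· ∉ K) σ hσ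
  have hprimitive : PrimitiveSet K τ :=
    ⟨hτ.prop, fun υ hυ => not_not.1 (hτ.not_prop_of_lt hυ)⟩
  exact (Nat.sInf_le ⟨τ, hprimitive, rfl⟩ : rmin K ≤ τ.card).trans (Finset.card_le_card hτσ)

lemma dmin_le (D : Fin r → ℕ) (k : Fin r) : dmin D ≤ D k := Nat.sInf_le ⟨k, rfl⟩

lemma add_one_lt_of_le_dBound {k : ℕ} (hk : (k : ℤ) ≤ dBound K D) :
    k + 1 < 2 * (rmin K - 1) * dmin D := by
  rw [dBound] at hk
  have hρ : 1 ≤ rmin K := Nat.pos_of_ne_zero fun h => by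
    rw [h] at hk
    omega
  zify [hρ]
  linarith

theorem stabilization_homotopyEquiv_through_general (hle : ∀ k, D k ≤ D' k) {N : ℝ}
    {φ : ℂ → ℂ} (hφ : AdmissiblePhi N φ) {xpt : Fin r → ℂ} (hx : ∀ k, N < (xpt k).re)
    (hxinj : Function.Injective xpt) (s : C(PolSp K D, PolSp K D'))
    (hs : StabSpec K φ xpt D D' s) : HomotopyEquivThrough s (dBound K D) := by
  have hlifting : ∀ m < 2 * (rmin K - 1) * dmin D, HasCubeLifting (Fin m) s := fun m hm =>
    hasCubeLifting_of_stabSpec hle hφ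
      (fun σ hσ => (one_lt_of_lt_mul hm).trans_le (rmin_le_card hσ)) hx hxinj hs <|
      hasCubeLifting_mulI_of_covBy
        (fun h hq => hasCubeLifting_mulI_covBy (fun _ => rmin_le_card) h hq hm) hle (dmin_le D)
  intro x k hk
  have hk' := add_one_lt_of_le_dBound hk
  exact ⟨piMap_injective_of_hasCubeLifting (hlifting (k + 1) hk') x,
    piMap_surjective_of_hasCubeLifting (hlifting k (Nat.lt_of_succ_lt hk')) x⟩

end Stabilization

/-- The stabilization map
`s_{D,D'} : Pol*_D(S¹,X_Σ) → Pol*_{D'}(S¹,X_Σ)`, for `D' − D ∈ (ℤ_{≥0})^r ∖ {0}` and any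
admissible choice of `(φ_D, (x_{D,1},…,x_{D,r}))`, is a homotopy equivalence through
dimension `d(D,Σ) = 2(r_min(Σ)−1)d_min − 2`. -/
theorem stabilization_homotopyEquiv_through
    {n r : ℕ} (F : Fan n) (N : Fin r → Fin n → ℤ)
    (hPG : IsPrimGens F N) (h1 : Cond1 N) (h2 : Cond2 N)
    (D D' : Fin r → ℕ) (hD : ∀ k, 0 < D k) (hD' : ∀ k, 0 < D' k)
    (hle : ∀ k, D k ≤ D' k) (hne : D ≠ D')
    (φ : ℂ → ℂ) (hφ : AdmissiblePhi ((∑ k, D k : ℕ) : ℝ) φ)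
    (xpt : Fin r → ℂ) (hx : ∀ k, ((∑ k, D k : ℕ) : ℝ) < (xpt k).re)
    (hxinj : Function.Injective xpt)
    (s : C(↥(PolSp (KC F N) D), ↥(PolSp (KC F N) D')))
    (hs : StabSpec (KC F N) φ xpt D D' ⇑s) :
    HomotopyEquivThrough s (dBound (KC F N) D) := by
  exact stabilization_homotopyEquiv_through_general hle hφ hx hxinj s hs

end Toric
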